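/- Let t ≥ 15 be an integer, n ≥ t, and let 0 < p ≤ p_0(t). If 𝒢 ⊆ 2^[n] is a 3-wise t-intersecting family, then μ_p(𝒢) ≤ p^t. Moreover, equality holds if and only if 𝒢 is isomorphic to F_0^t, or p = p_0(t) and 𝒢 is isomorphic to F_1^t (the latter case requiring n ≥ t+3). -/

import Mathlib

/-!
Identify a subset of `[n]` with a lattice walk that steps up at its elements and right elsewhere.

Enlarging `𝒢` to the increasing family it generates on `[n + 6]` does not decrease the measure, and
shifts `σ_{i,j}` keep the measure, the intersection property and monotonicity, so suppose first
that the family is increasing and shifted (`shifted_case`). It then contains every set whose walk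
runs above that of a member (`dom`). Hence each walk reaches the line `y = 2x + t` (`all_hit`), since
otherwise the complements of three residue classes mod `3` in `{t, t + 1, …}` would be members.
If the family lies in `F_0`, or in `F_1`, the bound is the measure of that family, and
`μ(F_1) ≤ p ^ t` holds for `p ≤ p₀(t)` with equality only at `p₀(t)`. If it lies in neither, a strict
bound `μ_x < x ^ t` is proved at one point `x ≥ p₀(t)` (`numeric`); since `log μ_p / log p` is
monotone in `p` for increasing families (`pr_rpow`, `pr_lt_of_le`), it descends to `p`. At `x`,
either the family lies in `F_2`, whose measure is explicit, or (`generic_bound`) one starts from the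
probability of reaching the line, which is at most `α ^ t` whenever `x + (1 - x) α ^ 3 ≤ α`
(`pr_hit_le`). Among the walks that first reach the line at height `t`, `t + 2` or `t + 4`,
those of members with a given prefix have pairwise intersecting continuations (`tails_intersect`),
so by the biased Erdős–Ko–Rado bound (`pr_intersecting`) a proportion at least `1 - x` of these walks
does not belong to the family.

So an increasing shifted family of measure at least `p ^ t` contains a `t`-set, or `p = p₀(t)` and it
contains all `(t + 2)`-subsets of a `(t + 3)`-set. Either configuration pulls back through a shift
(`unshift_F1`, `increasing_case`), where the induction is on the total sum of the elements of the
members. On `[n]` the configuration forces `𝒢` into a copy of `F_0` or `F_1`; by measure `𝒢` is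
that copy (`isom_of_le`).
-/

open Finset

/-- The `p`-measure of a family of subsets of `[n] = {1,…,n}`. -/
noncomputable def mu (p : ℝ) (n : ℕ) (𝒢 : Finset (Finset ℕ)) : ℝ :=
  ∑ G ∈ 𝒢, p ^ G.card * (1 - p) ^ (n - G.card)

/-- `𝒢` is a family of subsets of `[n] = {1,…,n}`. -/
def FamilyOn (n : ℕ) (𝒢 : Finset (Finset ℕ)) : Prop :=
  ∀ G ∈ 𝒢, G ⊆ Finset.Icc 1 n

/-- `𝒢` is 3-wise `t`-intersecting. -/
def Intersecting3 (t : ℕ) (𝒢 : Finset (Finset ℕ)) : Prop :=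
  ∀ G₁ ∈ 𝒢, ∀ G₂ ∈ 𝒢, ∀ G₃ ∈ 𝒢, t ≤ (G₁ ∩ G₂ ∩ G₃).card

/-- `𝒢` is shifted (stable under all shifting operations `σ_{i,j}`). -/
def Shifted (n : ℕ) (𝒢 : Finset (Finset ℕ)) : Prop :=
  ∀ i j : ℕ, 1 ≤ i → i < j → j ≤ n → ∀ G ∈ 𝒢, j ∈ G → i ∉ G →
    insert i (G.erase j) ∈ 𝒢

/-- `𝒢` is inclusion maximal as a family of subsets of `[n]`. -/
def InclMaximal (n : ℕ) (𝒢 : Finset (Finset ℕ)) : Prop :=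
  ∀ G ∈ 𝒢, ∀ H : Finset ℕ, G ⊆ H → H ⊆ Finset.Icc 1 n → H ∈ 𝒢

/-- The family `F_s^t = {F ⊆ [n] : |F ∩ [t+3s]| ≥ t+2s}`. -/
def Fst (n t s : ℕ) : Finset (Finset ℕ) :=
  (Finset.Icc 1 n).powerset.filter
    (fun F => t + 2 * s ≤ (F ∩ Finset.Icc 1 (t + 3 * s)).card)

/-- The threshold `p₀(t) = 2/(√(4t+9) − 1)`. -/
noncomputable def p0 (t : ℕ) : ℝ := 2 / (Real.sqrt (4 * t + 9) - 1)

/-- `α(p) = (√((1+3p)/(1−p)) − 1)/2`. -/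
noncomputable def alpha (p : ℝ) : ℝ := (Real.sqrt ((1 + 3 * p) / (1 - p)) - 1) / 2

/-- Two families of subsets of `[n]` are isomorphic: one is the image of the
other under a permutation of `[n]`. -/
def Isom (n : ℕ) (𝒢 𝒢' : Finset (Finset ℕ)) : Prop :=
  ∃ π : Equiv.Perm ℕ, (∀ x ∈ Finset.Icc 1 n, π x ∈ Finset.Icc 1 n) ∧
    𝒢' = 𝒢.image (fun G => G.image π)

/-- The walk of `G ⊆ [n]` hits the line `y = 2x + c`
(at some step `j ≤ n`, where hitting at step `j` means `3|G∩[j]| = 2j + c`). -/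
def HitsLine (n c : ℕ) (G : Finset ℕ) : Prop :=
  ∃ j : ℕ, j ≤ n ∧ 3 * (G ∩ Finset.Icc 1 j).card = 2 * j + c

/-! ### Random subsets and increasing events -/

/-- Expectation of `f` over a random subset of `X` that contains each element of `X`
independently with probability `p`. -/
noncomputable def ev (p : ℝ) (X : Finset ℕ) (f : Finset ℕ → ℝ) : ℝ :=
  ∑ G ∈ X.powerset, p ^ G.card * (1 - p) ^ (X.card - G.card) * f G

open Classical in
/-- Real-valued indicator of a proposition. -/
noncomputable def ind (P : Prop) : ℝ := if P then 1 else 0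

/-- Probability that the `p`-random subset of `X` satisfies `P`. -/
noncomputable def pr (p : ℝ) (X : Finset ℕ) (P : Finset ℕ → Prop) : ℝ :=
  ev p X (fun G => ind (P G))

lemma ind_true {P : Prop} (h : P) : ind P = 1 := by simp [ind, h]
lemma ind_false {P : Prop} (h : ¬ P) : ind P = 0 := by simp [ind, h]
lemma ind_nonneg (P : Prop) : 0 ≤ ind P := by unfold ind; split_ifs <;> norm_num
lemma ind_le_one (P : Prop) : ind P ≤ 1 := by unfold ind; split_ifs <;> norm_num
lemma ind_mono {P Q : Prop} (h : P → Q) : ind P ≤ ind Q := by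
  by_cases hP : P
  · rw [ind_true hP, ind_true (h hP)]
  · rw [ind_false hP]; exact ind_nonneg _

lemma ev_empty (p : ℝ) (f : Finset ℕ → ℝ) : ev p ∅ f = f ∅ := by simp [ev]

lemma ev_insert (p : ℝ) {X : Finset ℕ} {a : ℕ} (ha : a ∉ X) (f : Finset ℕ → ℝ) :
    ev p (insert a X) f = ev p X (fun G => (1 - p) * f G + p * f (insert a G)) := by
  unfold ev
  rw [sum_powerset_insert ha, ← sum_add_distrib]
  refine sum_congr rfl fun G hG => ?_
  rw [mem_powerset] at hG
  have h1 : a ∉ G := fun h => ha (hG h)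
  have h2 := card_le_card hG
  rw [card_insert_of_notMem ha, card_insert_of_notMem h1,
    show X.card + 1 - G.card = (X.card - G.card) + 1 by omega,
    show X.card + 1 - (G.card + 1) = X.card - G.card by omega]
  ring

lemma ev_congr {p : ℝ} {X : Finset ℕ} {f g : Finset ℕ → ℝ} (h : ∀ G ⊆ X, f G = g G) :
    ev p X f = ev p X g :=
  sum_congr rfl fun G hG => by rw [h G (mem_powerset.1 hG)]

lemma ev_mono {p : ℝ} (h0 : 0 ≤ p) (h1 : p ≤ 1) {X : Finset ℕ} {f g : Finset ℕ → ℝ}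
    (h : ∀ G ⊆ X, f G ≤ g G) : ev p X f ≤ ev p X g :=
  sum_le_sum fun G hG => mul_le_mul_of_nonneg_left (h G (mem_powerset.1 hG))
    (mul_nonneg (pow_nonneg h0 _) (pow_nonneg (by linarith) _))

lemma ev_add (p : ℝ) (X : Finset ℕ) (f g : Finset ℕ → ℝ) :
    ev p X (fun G => f G + g G) = ev p X f + ev p X g := by
  simp only [ev, mul_add, sum_add_distrib]

lemma ev_sub (p : ℝ) (X : Finset ℕ) (f g : Finset ℕ → ℝ) :
    ev p X (fun G => f G - g G) = ev p X f - ev p X g := by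
  simp only [ev, mul_sub, sum_sub_distrib]

lemma ev_smul (p c : ℝ) (X : Finset ℕ) (f : Finset ℕ → ℝ) :
    ev p X (fun G => c * f G) = c * ev p X f := by
  simp only [ev, mul_sum]
  exact sum_congr rfl fun G _ => by ring

lemma ev_const (p c : ℝ) (X : Finset ℕ) : ev p X (fun _ => c) = c := by
  induction X using Finset.induction_on with
  | empty => simp [ev_empty]
  | insert a X ha ih =>
    rw [ev_insert p ha]
    convert ih using 2
    ring_nf

/-- Independence of the coordinates in two disjoint ground sets. -/
lemma ev_union (p : ℝ) {X Y : Finset ℕ} (h : Disjoint X Y) (f : Finset ℕ → ℝ) :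
    ev p (X ∪ Y) f = ev p X (fun A => ev p Y (fun B => f (A ∪ B))) := by
  induction Y using Finset.induction_on generalizing f with
  | empty => simp [ev_empty]
  | insert a Y ha ih =>
    rw [disjoint_insert_right] at h
    have h1 : a ∉ X ∪ Y := by simp [h.1, ha]
    rw [union_insert, ev_insert p h1, ih h.2]
    refine ev_congr fun A _ => ?_
    rw [ev_insert p ha]
    simp only [union_insert]

lemma pr_nonneg {p : ℝ} (h0 : 0 ≤ p) (h1 : p ≤ 1) (X : Finset ℕ) (P : Finset ℕ → Prop) :
    0 ≤ pr p X P := by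
  have := ev_mono h0 h1 (X := X) (f := fun _ => 0) (g := fun G => ind (P G))
    (fun G _ => ind_nonneg _)
  rwa [ev_const] at this

lemma pr_mono {p : ℝ} (h0 : 0 ≤ p) (h1 : p ≤ 1) {X : Finset ℕ} {P Q : Finset ℕ → Prop}
    (h : ∀ G ⊆ X, P G → Q G) : pr p X P ≤ pr p X Q :=
  ev_mono h0 h1 fun G hG => ind_mono (h G hG)

lemma pr_insert (p : ℝ) {X : Finset ℕ} {a : ℕ} (ha : a ∉ X) (P : Finset ℕ → Prop) :
    pr p (insert a X) P = (1 - p) * pr p X P + p * pr p X (fun G => P (insert a G)) := by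
  unfold pr
  rw [ev_insert p ha, ev_add, ev_smul, ev_smul]

/-- Two nested events of equal positive-weight measure coincide. -/
lemma pr_eq_imp {p : ℝ} (h0 : 0 < p) (h1 : p < 1) {X : Finset ℕ} {P Q : Finset ℕ → Prop}
    (h : ∀ G ⊆ X, P G → Q G) (hle : pr p X Q ≤ pr p X P) : ∀ G ⊆ X, Q G → P G := by
  intro G hG hQ
  by_contra hP
  refine absurd hle (not_le.2 ?_)
  unfold pr ev
  have hpos : ∀ G : Finset ℕ, 0 < p ^ G.card * (1 - p) ^ (X.card - G.card) := fun G =>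
    mul_pos (pow_pos h0 _) (pow_pos (by linarith) _)
  refine sum_lt_sum (fun A hA => mul_le_mul_of_nonneg_left
    (ind_mono (h A (mem_powerset.1 hA))) (hpos A).le) ⟨G, mem_powerset.2 hG, ?_⟩
  simp only [ind_true hQ, ind_false hP]
  have := hpos G
  linarith

/-- The two-point inequality behind `pr_rpow`: with `p = r ^ c`, it expresses that
`u ↦ (u + b) ^ c - u ^ c` is nondecreasing. -/
lemma two_point {r c x y : ℝ} (hr0 : 0 < r) (hr1 : r < 1) (hc : 1 ≤ c) (hy : 0 ≤ y)
    (hxy : y ≤ x) :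
    (1 - r ^ c) * y ^ c + r ^ c * x ^ c ≤ ((1 - r) * y + r * x) ^ c := by
  have hx : 0 ≤ x := hy.trans hxy
  have hb : 0 ≤ (1 - r) * y := mul_nonneg (by linarith) hy
  rcases hb.eq_or_lt with hb0 | hb0
  · have hy0 : y = 0 := by
      rcases mul_eq_zero.1 hb0.symm with h | h
      · linarith
      · exact h
    subst hy0
    rw [Real.zero_rpow (by linarith), mul_zero, mul_zero, zero_add, zero_add,
      Real.mul_rpow hr0.le hx]
  · rcases hxy.eq_or_lt with hxy' | hxy'
    · subst hxy'
      rw [show (1 - r) * y + r * y = y by ring]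
      linarith
    have hconv := convexOn_rpow hc
    -- slopes of the convex power function over `[r*y, y]` and over `[r*x, (1-r)*y + r*x]`
    have hry : r * y < r * x := mul_lt_mul_of_pos_left hxy' hr0
    set g : ℝ → ℝ := fun z => z ^ c with hg
    have key : g y + g (r * x) ≤ g ((1 - r) * y + r * x) + g (r * y) := by
      set A := r * y
      set D := (1 - r) * y + r * x with hD
      have hAD : A < D := by simp only [A, D]; linarith
      have hyD : y = ((D - y) / (D - A)) * A + ((y - A) / (D - A)) * D := by
        field_simp [sub_ne_zero.2 hAD.ne']
        ring
      have hxD : r * x = ((D - r * x) / (D - A)) * A + ((r * x - A) / (D - A)) * D := by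
        field_simp [sub_ne_zero.2 hAD.ne']
        ring
      have hA0 : A ∈ Set.Ici (0 : ℝ) := mul_nonneg hr0.le hy
      have hD0 : D ∈ Set.Ici (0 : ℝ) := add_nonneg hb (mul_nonneg hr0.le hx)
      have hpos : 0 < D - A := sub_pos.2 hAD
      have hcv : ∀ u v : ℝ, 0 ≤ u → 0 ≤ v → u + v = 1 →
          (u * A + v * D) ^ c ≤ u * A ^ c + v * D ^ c := fun u v hu hv huv =>
        hconv.2 hA0 hD0 hu hv huv
      have e1 := hcv ((D - y) / (D - A)) ((y - A) / (D - A))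
        (div_nonneg (by simp only [D]; nlinarith) hpos.le)
        (div_nonneg (by simp only [A]; nlinarith) hpos.le) (by field_simp; ring)
      have e2 := hcv ((D - r * x) / (D - A)) ((r * x - A) / (D - A))
        (div_nonneg (by simp only [D]; linarith) hpos.le)
        (div_nonneg (by simp only [A]; linarith) hpos.le) (by field_simp; ring)
      rw [← hyD] at e1
      rw [← hxD] at e2
      have s1 : (D - y) / (D - A) + (D - r * x) / (D - A) = 1 := by
        field_simp; simp only [A, D]; ring
      have s2 : (y - A) / (D - A) + (r * x - A) / (D - A) = 1 := by
        field_simp; simp only [A, D]; ring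
      calc g y + g (r * x) ≤ _ := add_le_add e1 e2
        _ = ((D - y) / (D - A) + (D - r * x) / (D - A)) * A ^ c +
            ((y - A) / (D - A) + (r * x - A) / (D - A)) * D ^ c := by ring
        _ = g D + g A := by rw [s1, s2]; simp only [hg]; ring
    simp only [hg] at key
    rw [Real.mul_rpow hr0.le hx, Real.mul_rpow hr0.le hy] at key
    linarith

/-- For an increasing event, `log μ_p / log p` is nondecreasing in `p`; here `p = r ^ c ≤ r`. -/
lemma pr_rpow {r c : ℝ} (hr0 : 0 < r) (hr1 : r < 1) (hc : 1 ≤ c) (X : Finset ℕ)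
    (P : Finset ℕ → Prop) (hP : ∀ A B, A ⊆ B → B ⊆ X → P A → P B) :
    pr (r ^ c) X P ≤ pr r X P ^ c := by
  have hp0 : 0 ≤ r ^ c := (Real.rpow_pos_of_pos hr0 c).le
  have hp1 : r ^ c ≤ 1 := Real.rpow_le_one hr0.le hr1.le (by linarith)
  induction X using Finset.induction_on generalizing P with
  | empty =>
    simp only [pr, ev_empty]
    by_cases h : P ∅
    · simp [ind_true h]
    · rw [ind_false h, Real.zero_rpow (by linarith)]
  | insert a X ha ih =>
    rw [pr_insert _ ha, pr_insert _ ha]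
    have i1 := ih P fun A B hAB hB hA => hP A B hAB (hB.trans (subset_insert _ _)) hA
    have i2 := ih (fun G => P (insert a G)) fun A B hAB hB hA =>
      hP _ _ (insert_subset_insert _ hAB) (insert_subset_insert _ hB) hA
    have hm : pr r X P ≤ pr r X (fun G => P (insert a G)) :=
      pr_mono hr0.le hr1.le fun G hG h =>
        hP G _ (subset_insert _ _) (insert_subset_insert _ hG) h
    refine le_trans ?_ (two_point hr0 hr1 hc (pr_nonneg hr0.le hr1.le X P) hm)
    exact add_le_add (mul_le_mul_of_nonneg_left i1 (by linarith))
      (mul_le_mul_of_nonneg_left i2 hp0)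

/-- `pr_rpow` in the form used below: a strict bound `x ^ t` at `x` descends to all `p ≤ x`. -/
lemma pr_lt_of_le {p x : ℝ} (hp : 0 < p) (hpx : p ≤ x) (hx : x < 1) (t : ℕ) (X : Finset ℕ)
    (P : Finset ℕ → Prop) (hP : ∀ A B, A ⊆ B → B ⊆ X → P A → P B)
    (h : pr x X P < x ^ t) : pr p X P < p ^ t := by
  have hx0 : 0 < x := hp.trans_le hpx
  have hlx : Real.log x < 0 := Real.log_neg hx0 hx
  set c := Real.log p / Real.log x with hc
  have hc1 : 1 ≤ c := by
    rw [hc, one_le_div_of_neg hlx]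
    exact Real.log_le_log hp hpx
  have hpc : x ^ c = p := by
    rw [Real.rpow_def_of_pos hx0, hc, mul_div_cancel₀ _ hlx.ne, Real.exp_log hp]
  have := pr_rpow hx0 hx hc1 X P hP
  rw [hpc] at this
  refine this.trans_lt ?_
  calc pr x X P ^ c < (x ^ t) ^ c :=
        Real.rpow_lt_rpow (pr_nonneg hx0.le hx.le _ _) h (by linarith)
    _ = p ^ t := by
        rw [← Real.rpow_natCast, ← Real.rpow_mul hx0.le, mul_comm, Real.rpow_mul hx0.le, hpc,
          Real.rpow_natCast]

/-- The `p`-biased Erdős–Ko–Rado bound for increasing intersecting events, `p ≤ 1/2`: at `1/2`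
complementation gives the bound `1/2`, and `pr_rpow` transports it to `p`. -/
lemma pr_intersecting {p : ℝ} (hp : 0 < p) (hp2 : p ≤ 1 / 2) (X : Finset ℕ)
    (P : Finset ℕ → Prop) (hP : ∀ A B, A ⊆ B → B ⊆ X → P A → P B)
    (hI : ∀ A B, A ⊆ X → B ⊆ X → P A → P B → (A ∩ B).Nonempty) : pr p X P ≤ p := by
  have half : pr (1 / 2) X P ≤ 1 / 2 := by
    have hw : ∀ f : Finset ℕ → ℝ, ev (1 / 2) X f = (1 / 2) ^ X.card * ∑ G ∈ X.powerset, f G := by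
      intro f
      rw [ev, mul_sum]
      refine sum_congr rfl fun G hG => ?_
      rw [show (1 : ℝ) - 1 / 2 = 1 / 2 by norm_num, ← pow_add,
        Nat.add_sub_cancel' (card_le_card (mem_powerset.1 hG))]
    have hcomp : ev (1 / 2) X (fun G => ind (P (X \ G))) = pr (1 / 2) X P := by
      rw [pr, hw, hw]
      congr 1
      refine sum_nbij' (fun G => X \ G) (fun G => X \ G) ?_ ?_ ?_ ?_ ?_
      · intro G _; simp
      · intro G _; simp
      · intro G hG; exact Finset.sdiff_sdiff_eq_self (mem_powerset.1 hG)
      · intro G hG; exact Finset.sdiff_sdiff_eq_self (mem_powerset.1 hG)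
      · intro G _; rfl
    have hsum : ev (1 / 2) X (fun G => ind (P G) + ind (P (X \ G))) ≤ 1 := by
      refine le_trans (ev_mono (g := fun _ => 1) (by norm_num) (by norm_num) fun G hG => ?_)
        (ev_const (1 / 2) 1 X).le
      by_cases h : P G
      · have : ¬ P (X \ G) := fun h' => by
          have := hI _ _ hG sdiff_subset h h'
          simp at this
        rw [ind_true h, ind_false this]; norm_num
      · rw [ind_false h, zero_add]; exact ind_le_one _
    rw [ev_add, hcomp] at hsum
    have : pr (1 / 2) X P = ev (1 / 2) X (fun G => ind (P G)) := rfl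
    linarith
  have hl : Real.log (1 / 2) < 0 := Real.log_neg (by norm_num) (by norm_num)
  set c := Real.log p / Real.log (1 / 2) with hc
  have hc1 : 1 ≤ c := by
    rw [hc, one_le_div_of_neg hl]
    exact Real.log_le_log hp hp2
  have hpc : (1 / 2 : ℝ) ^ c = p := by
    rw [Real.rpow_def_of_pos (by norm_num), hc, mul_div_cancel₀ _ hl.ne, Real.exp_log hp]
  have := pr_rpow (r := 1 / 2) (by norm_num) (by norm_num) hc1 X P hP
  rw [hpc] at this
  refine this.trans ?_
  calc pr (1 / 2) X P ^ c ≤ (1 / 2 : ℝ) ^ c :=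
        Real.rpow_le_rpow (pr_nonneg (by norm_num) (by norm_num) _ _) half (by linarith)
    _ = p := hpc

/-! ### Walks of shifted families -/

/-- The number of elements of `G` in `[j]`. -/
def cnt (G : Finset ℕ) (j : ℕ) : ℕ := (G ∩ Icc 1 j).card

lemma cnt_le (G : Finset ℕ) (j : ℕ) : cnt G j ≤ j := by
  have := card_le_card (inter_subset_right (s₁ := G) (s₂ := Icc 1 j))
  simpa [cnt] using this

lemma cnt_succ (G : Finset ℕ) (j : ℕ) :
    cnt G (j + 1) = cnt G j + if j + 1 ∈ G then 1 else 0 := by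
  unfold cnt
  rw [← insert_Icc_right_eq_Icc_add_one (by omega : 1 ≤ j + 1)]
  split_ifs with h
  · rw [inter_insert_of_mem h, card_insert_of_notMem (by simp)]
  · rw [inter_insert_of_notMem h, add_zero]

lemma cnt_mono (G : Finset ℕ) {i j : ℕ} (h : i ≤ j) : cnt G i ≤ cnt G j :=
  card_le_card (inter_subset_inter_left (Icc_subset_Icc_right h))

lemma cnt_le_add (G : Finset ℕ) {i j : ℕ} (h : i ≤ j) : cnt G j ≤ cnt G i + (j - i) := by
  induction j, h using Nat.le_induction with
  | base => omega
  | succ j hj ih => rw [cnt_succ]; split_ifs <;> omega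

lemma cnt_sdiff {N j : ℕ} (hj : j ≤ N) (D : Finset ℕ) :
    cnt (Icc 1 N \ D) j + cnt D j = j := by
  have h : (Icc 1 N \ D) ∩ Icc 1 j = Icc 1 j \ D := by
    ext x; simp only [mem_inter, mem_sdiff, mem_Icc]; grind
  have := card_sdiff_add_card_inter (Icc 1 j) D
  rw [inter_comm] at this
  simpa [cnt, h] using this

lemma cnt_subset {N : ℕ} {G : Finset ℕ} (hG : G ⊆ Icc 1 N) {j : ℕ} (hj : N ≤ j) :
    cnt G j = G.card := by
  rw [cnt, inter_eq_left.2 (hG.trans (Icc_subset_Icc_right hj))]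

lemma cnt_union {A B : Finset ℕ} (h : Disjoint A B) (j : ℕ) :
    cnt (A ∪ B) j = cnt A j + cnt B j := by
  rw [cnt, union_inter_distrib_right, card_union_of_disjoint]
  · rfl
  · exact h.mono inter_subset_left inter_subset_left

lemma cnt_singleton {a : ℕ} (ha : 1 ≤ a) (j : ℕ) : cnt {a} j = if a ≤ j then 1 else 0 := by
  rw [cnt]
  split_ifs with h
  · rw [singleton_inter_of_mem (by simp; omega)]; simp
  · rw [singleton_inter_of_notMem (by simp; omega)]; simp

lemma cnt_pair {a b : ℕ} (ha : 1 ≤ a) (hab : a < b) (j : ℕ) :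
    cnt {a, b} j = (if a ≤ j then 1 else 0) + if b ≤ j then 1 else 0 := by
  rw [insert_eq, cnt_union (by simp; omega), cnt_singleton ha, cnt_singleton (by omega)]

lemma cnt_Icc {a : ℕ} (ha : 1 ≤ a) (b j : ℕ) : cnt (Icc a b) j = min b j + 1 - a := by
  have : Icc a b ∩ Icc 1 j = Icc a (min b j) := by
    ext x; simp only [mem_inter, mem_Icc]; omega
  rw [cnt, this, Nat.card_Icc]

/-- In a shifted increasing family, a member may be replaced by any set whose walk is
everywhere at least as high. -/
lemma dom {N : ℕ} {𝒢 : Finset (Finset ℕ)} (hF : FamilyOn N 𝒢) (hS : Shifted N 𝒢)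
    (hU : InclMaximal N 𝒢) {H : Finset ℕ} (hH : H ⊆ Icc 1 N) :
    ∀ {G : Finset ℕ}, G ∈ 𝒢 → (∀ j ≤ N, cnt G j ≤ cnt H j) → H ∈ 𝒢 := by
  suffices ∀ (m : ℕ) (G : Finset ℕ), (G \ H).card = m → G ∈ 𝒢 →
      (∀ j ≤ N, cnt G j ≤ cnt H j) → H ∈ 𝒢 from fun {G} hG h => this _ G rfl hG h
  intro m
  induction m with
  | zero =>
    intro G hm hG _
    exact hU G hG H (sdiff_eq_empty_iff_subset.1 (card_eq_zero.1 hm)) hH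
  | succ m ih =>
    intro G hm hG hle
    have hne : (G \ H).Nonempty := card_pos.1 (by omega)
    -- `k` is the first element to be moved, `j` an earlier free slot of `H`
    set k := (G \ H).min' hne with hk
    have hkm : k ∈ G \ H := min'_mem _ _
    have hkmin : ∀ x ∈ G \ H, k ≤ x := fun x hx => min'_le _ _ hx
    rw [mem_sdiff] at hkm
    have hkN := mem_Icc.1 (hF G hG hkm.1)
    obtain ⟨j, hjH, hjG⟩ : ∃ j ∈ H ∩ Icc 1 k, j ∉ G ∩ Icc 1 k := by
      by_contra hcon
      push Not at hcon
      have h1 : H ∩ Icc 1 k ⊂ G ∩ Icc 1 k := by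
        refine ⟨hcon, fun h => hkm.2 ?_⟩
        have := h (mem_inter.2 ⟨hkm.1, mem_Icc.2 ⟨hkN.1, le_rfl⟩⟩)
        exact (mem_inter.1 this).1
      exact absurd (hle k hkN.2) (not_le.2 (card_lt_card h1))
    rw [mem_inter, mem_Icc] at hjH
    have hjG' : j ∉ G := fun h => hjG (mem_inter.2 ⟨h, mem_Icc.2 hjH.2⟩)
    have hjk : j < k := lt_of_le_of_ne hjH.2.2 (fun h => hkm.2 (h ▸ hjH.1))
    have hG' := hS j k hjH.2.1 hjk hkN.2 G hG hkm.1 hjG'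
    refine ih _ ?_ hG' ?_
    · have : insert j (G.erase k) \ H = (G \ H).erase k := by
        ext x; simp only [mem_sdiff, mem_insert, mem_erase]; grind
      rw [this, card_erase_of_mem (mem_sdiff.2 hkm), hm]; omega
    · intro i hi
      by_cases hik : i < k
      · -- below `k` the new set is contained in `H`
        refine card_le_card fun x hx => ?_
        rw [mem_inter, mem_insert, mem_erase, mem_Icc] at hx
        rw [mem_inter, mem_Icc]
        refine ⟨?_, hx.2⟩
        rcases hx.1 with rfl | hx1
        · exact hjH.1
        · by_contra hxH
          have := hkmin x (mem_sdiff.2 ⟨hx1.2, hxH⟩)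
          omega
      · refine le_trans (le_of_eq ?_) (hle i hi)
        have e : insert j (G.erase k) ∩ Icc 1 i = insert j ((G ∩ Icc 1 i).erase k) := by
          ext x; simp only [mem_inter, mem_insert, mem_erase, mem_Icc]; grind
        rw [cnt, e, card_insert_of_notMem (by simp [hjG']),
          card_erase_of_mem (by simp [hkm.1]; omega)]
        have : 0 < (G ∩ Icc 1 i).card := card_pos.2 ⟨k, by simp [hkm.1]; omega⟩
        unfold cnt
        omega

/-- The walk of `G` reaches the line `y = 2x + t` within `N` steps. -/
def Hit (t N : ℕ) (G : Finset ℕ) : Prop := ∃ j ≤ N, 2 * j + t ≤ 3 * cnt G j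

/-- Every walk of a shifted increasing `3`-wise `t`-intersecting family reaches `y = 2x + t`:
otherwise the family contains the complements of three disjoint arithmetic progressions of
difference `3` which together cover everything from `t` on. -/
lemma all_hit {N t : ℕ} (ht : 1 ≤ t) {𝒢 : Finset (Finset ℕ)} (hF : FamilyOn N 𝒢)
    (hS : Shifted N 𝒢) (hU : InclMaximal N 𝒢) (hI : Intersecting3 t 𝒢) {G : Finset ℕ}
    (hG : G ∈ 𝒢) : Hit t N G := by
  by_contra hcon
  unfold Hit at hcon
  push Not at hcon
  set M : ℕ → Finset ℕ := fun r => (Icc 1 N).filter fun x => t + r ≤ x ∧ x % 3 = (t + r) % 3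
    with hM
  have hcM : ∀ r j, cnt (M r) j ≤ (j + 3 - (t + r)) / 3 := by
    intro r j
    induction j with
    | zero => simp [cnt]
    | succ j ih =>
      rw [cnt_succ]
      split_ifs with h
      · simp only [hM, mem_filter] at h
        omega
      · omega
  have hmem : ∀ r, Icc 1 N \ M r ∈ 𝒢 := by
    intro r
    refine dom hF hS hU sdiff_subset hG fun j hj => ?_
    have h1 := hcM r j
    have h2 := cnt_sdiff hj (M r)
    have h3 := hcon j hj
    have h4 := cnt_le G j
    omega
  have h := hI _ (hmem 0) _ (hmem 1) _ (hmem 2)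
  have hsub : (Icc 1 N \ M 0) ∩ (Icc 1 N \ M 1) ∩ (Icc 1 N \ M 2) ⊆ Icc 1 (t - 1) := by
    intro x hx
    simp only [hM, mem_inter, mem_sdiff, mem_filter, mem_Icc, not_and] at hx
    rw [mem_Icc]
    have hx1 := hx.1.1.1
    have h0 := hx.1.1.2 hx1
    have h1 := hx.1.2.2 hx1
    have h2 := hx.2.2 hx1
    omega
  have := card_le_card hsub
  rw [Nat.card_Icc] at this
  omega

/-- A member with few elements in `[k]` forces a canonical member missing only the last few
elements of `[k]`. -/
lemma tail_mem {N k m : ℕ} (hm : 1 ≤ m) {𝒢 : Finset (Finset ℕ)}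
    (hF : FamilyOn N 𝒢) (hS : Shifted N 𝒢) (hU : InclMaximal N 𝒢) {G : Finset ℕ} (hG : G ∈ 𝒢)
    (h : cnt G k < m) : Icc 1 N \ Icc m k ∈ 𝒢 := by
  refine dom hF hS hU sdiff_subset hG fun j hj => ?_
  have h1 := cnt_sdiff hj (Icc m k)
  rw [cnt_Icc hm] at h1
  have h2 := cnt_le G j
  rcases le_total j k with hjk | hjk
  · have := cnt_mono G hjk
    omega
  · have := cnt_le_add G hjk
    omega

/-- Fix the set `D` of elements missing from `[k]`. If `D` can be moved right to `D₁` and to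
`D₂`, some member misses `D₃`, and `D₁ ∪ D₂ ∪ D₃` leaves fewer than `t` elements of `[k]`, then
the continuations beyond `k` of the members with prefix `[k] \ D` form an intersecting family. -/
lemma tails_intersect {N k t : ℕ} (hk : k ≤ N) {𝒢 : Finset (Finset ℕ)} (hF : FamilyOn N 𝒢)
    (hS : Shifted N 𝒢) (hU : InclMaximal N 𝒢) (hI : Intersecting3 t 𝒢)
    {D D₁ D₂ D₃ : Finset ℕ} (h₁ : ∀ j, cnt D₁ j ≤ cnt D j)
    (h₂ : ∀ j, cnt D₂ j ≤ cnt D j) (h₃ : Icc 1 N \ D₃ ∈ 𝒢)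
    (hc : (Icc 1 k \ (D₁ ∪ D₂ ∪ D₃)).card < t) {A B : Finset ℕ} (hA : A ⊆ Ioc k N)
    (hB : B ⊆ Ioc k N) (hAG : (Icc 1 k \ D) ∪ A ∈ 𝒢) (hBG : (Icc 1 k \ D) ∪ B ∈ 𝒢) :
    (A ∩ B).Nonempty := by
  have move : ∀ {D' A : Finset ℕ}, (∀ j, cnt D' j ≤ cnt D j) → A ⊆ Ioc k N →
      (Icc 1 k \ D) ∪ A ∈ 𝒢 → (Icc 1 k \ D') ∪ A ∈ 𝒢 := by
    intro D' A h' hA hG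
    have hsub : ∀ D : Finset ℕ, (Icc 1 k \ D) ∪ A ⊆ Icc 1 N := fun D => by
      refine union_subset (sdiff_subset.trans (Icc_subset_Icc_right hk)) fun x hx => ?_
      have := mem_Ioc.1 (hA hx)
      rw [mem_Icc]; omega
    have hdisj : ∀ D : Finset ℕ, Disjoint (Icc 1 k \ D) A := fun D => by
      rw [disjoint_left]
      intro x hx hxA
      have h1 := mem_Icc.1 (mem_sdiff.1 hx).1
      have h2 := mem_Ioc.1 (hA hxA)
      omega
    have hcut : ∀ D j, cnt (Icc 1 k \ D) j + cnt D (min j k) = min j k := fun D j => by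
      have e : cnt (Icc 1 k \ D) j = cnt (Icc 1 k \ D) (min j k) := by
        unfold cnt
        congr 1
        ext x; simp only [mem_inter, mem_sdiff, mem_Icc]; grind
      rw [e]; exact cnt_sdiff (min_le_right _ _) D
    refine dom hF hS hU (hsub D') hG fun j _ => ?_
    rw [cnt_union (hdisj D), cnt_union (hdisj D')]
    have e1 := hcut D j
    have e2 := hcut D' j
    have e3 := h' (min j k)
    omega
  by_contra hne
  rw [not_nonempty_iff_eq_empty] at hne
  have h := hI _ (move h₁ hA hAG) _ (move h₂ hB hBG) _ h₃
  refine absurd (h.trans (card_le_card ?_)) (not_le.2 hc)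
  intro x hx
  simp only [mem_inter, mem_union, mem_sdiff] at hx ⊢
  have hAx : x ∈ A → x ∈ Ioc k N := fun h => hA h
  have hBx : x ∈ B → x ∈ Ioc k N := fun h => hB h
  have hno : ¬ (x ∈ A ∧ x ∈ B) := fun h => by
    have := mem_inter.2 h
    rw [hne] at this
    exact notMem_empty _ this
  simp only [mem_Ioc, mem_Icc] at *
  grind

/-- The walk of a `p`-random set reaches `y = 2x + t` with probability at most `α ^ t` for every
supersolution `α` of `α = p + (1 - p) α ^ 3`: the weight `α ^ d`, where `d` is the remaining
distance to the line (and `d = 0` once the line was reached), has nonincreasing expectation. -/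
lemma pr_hit_le {p α : ℝ} (hp0 : 0 ≤ p) (hp1 : p ≤ 1) (hα0 : 0 ≤ α) (hα1 : α ≤ 1)
    (hα : p + (1 - p) * α ^ 3 ≤ α) {t : ℕ} (ht : 1 ≤ t) (N : ℕ) :
    pr p (Icc 1 N) (Hit t N) ≤ α ^ t := by
  classical
  set M : ℕ → Finset ℕ → ℝ := fun N G =>
    if Hit t N G then 1 else α ^ (t + 2 * N - 3 * cnt G N) with hM
  have hM1 : ∀ N G, M N G ≤ 1 := fun N G => by
    simp only [hM]; split_ifs
    · exact le_rfl
    · exact pow_le_one₀ hα0 hα1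
  have hM0 : ∀ N G, 0 ≤ M N G := fun N G => by
    simp only [hM]; split_ifs
    · exact zero_le_one
    · exact pow_nonneg hα0 _
  have hev : ∀ N, ev p (Icc 1 N) (M N) ≤ α ^ t := by
    intro N
    induction N with
    | zero =>
      have : ¬ Hit t 0 ∅ := by
        rintro ⟨j, hj, h⟩
        simp [cnt] at h
        omega
      rw [show Icc 1 0 = (∅ : Finset ℕ) from rfl, ev_empty]
      simp [hM, this, cnt]
    | succ N ih =>
      rw [← insert_Icc_right_eq_Icc_add_one (by omega : 1 ≤ N + 1), ev_insert p (by simp)]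
      refine le_trans (ev_mono hp0 hp1 fun G hG => ?_) ih
      have hNG : N + 1 ∉ G := fun h => by
        have := mem_Icc.1 (hG h); omega
      by_cases hhit : Hit t N G
      · have h1 := hM1 (N + 1) G
        have h2 := hM1 (N + 1) (insert (N + 1) G)
        have h3 : M N G = 1 := by simp [hM, hhit]
        rw [h3]
        nlinarith
      · have hd : 3 * cnt G N < 2 * N + t := by
          by_contra h
          exact hhit ⟨N, le_rfl, by omega⟩
        have c1 : cnt G (N + 1) = cnt G N := by rw [cnt_succ, if_neg hNG, add_zero]
        have cj : ∀ j ≤ N, cnt (insert (N + 1) G) j = cnt G j := fun j hj => by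
          rw [cnt, insert_inter_of_notMem (by simp; omega)]; rfl
        have c2 : cnt (insert (N + 1) G) (N + 1) = cnt G N + 1 := by
          rw [cnt_succ, if_pos (mem_insert_self _ _), cj N le_rfl]
        have hn1 : ¬ Hit t (N + 1) G := by
          rintro ⟨j, hj, h⟩
          rcases Nat.lt_or_ge N j with hjN | hjN
          · obtain rfl : j = N + 1 := by omega
            rw [c1] at h; omega
          · exact hhit ⟨j, hjN, h⟩
        obtain ⟨d, hd'⟩ : ∃ d, t + 2 * N - 3 * cnt G N = d + 1 := ⟨_, (Nat.succ_pred (by omega)).symm⟩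
        have e0 : M N G = α ^ (d + 1) := by simp only [hM]; rw [if_neg hhit, hd']
        have e1 : M (N + 1) G = α ^ (d + 3) := by
          simp only [hM]; rw [if_neg hn1, c1]; congr 1; omega
        have e2 : M (N + 1) (insert (N + 1) G) = α ^ d := by
          simp only [hM]
          split_ifs with h
          · obtain ⟨j, hj, h⟩ := h
            have : d = 0 := by
              rcases Nat.lt_or_ge N j with hjN | hjN
              · obtain rfl : j = N + 1 := by omega
                rw [c2] at h; omega
              · rw [cj j hjN] at h
                exact absurd ⟨j, hjN, h⟩ hhit
            rw [this, pow_zero]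
          · rw [c2]; congr 1; omega
        rw [e0, e1, e2]
        have := mul_le_mul_of_nonneg_left hα (pow_nonneg hα0 d)
        calc (1 - p) * α ^ (d + 3) + p * α ^ d = α ^ d * (p + (1 - p) * α ^ 3) := by ring
          _ ≤ α ^ d * α := this
          _ = α ^ (d + 1) := by ring
  refine le_trans (ev_mono hp0 hp1 fun G _ => ?_) (hev N)
  by_cases h : Hit t N G
  · rw [ind_true h]; simp [hM, h]
  · rw [ind_false h]; exact hM0 N G

/-! ### Numerical estimates -/

lemma p0_pos (t : ℕ) : 0 < p0 t := by
  have : (1 : ℝ) < Real.sqrt (4 * t + 9) := by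
    rw [Real.lt_sqrt (by norm_num)]
    have : (0 : ℝ) ≤ t := Nat.cast_nonneg t
    linarith
  unfold p0
  exact div_pos (by norm_num) (by linarith)

lemma p0_eq (t : ℕ) : ((t : ℝ) + 2) * p0 t ^ 2 = 1 + p0 t := by
  have ht : (0 : ℝ) ≤ t := Nat.cast_nonneg t
  have h1 : (1 : ℝ) < Real.sqrt (4 * t + 9) := by
    rw [Real.lt_sqrt (by norm_num)]
    linarith
  have h2 := Real.sq_sqrt (by linarith : (0 : ℝ) ≤ 4 * t + 9)
  unfold p0
  set s := Real.sqrt (4 * t + 9)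
  have h3 : s - 1 ≠ 0 := by linarith
  field_simp
  linarith

lemma p0_le_of {t : ℕ} {x : ℝ} (hx : 0 < x) (h : 1 + x ≤ ((t : ℝ) + 2) * x ^ 2) : p0 t ≤ x := by
  have h1 := p0_pos t
  have h2 := p0_eq t
  by_contra hlt
  push Not at hlt
  -- `(1 + x) / x ^ 2` is strictly decreasing
  have h3 : (1 + x) * p0 t ^ 2 ≤ (1 + p0 t) * x ^ 2 := by
    rw [← h2]; nlinarith [sq_nonneg (p0 t)]
  nlinarith [mul_pos hx h1]

/-- The polynomial inequality that places `μ(F_2)` below `p ^ t` once `(t + 2) p² = 1 + p`. -/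
lemma numeric_F2 {p : ℝ} (hp : 0 < p) (hp24 : p ≤ 0.2372) :
    (1 + p + 4 * p ^ 2) * (1 + p + 3 * p ^ 2) / 2 * (1 - p) ^ 2 +
      (1 + p + 4 * p ^ 2) * p ^ 3 * (1 - p) + p ^ 6 < 1 := by
  have a0 : p ^ 2 ≤ 0.2372 ^ 2 := pow_le_pow_left₀ hp.le hp24 2
  have a3 : p ^ 3 ≤ 0.2372 ^ 3 := pow_le_pow_left₀ hp.le hp24 3
  have a4 : p ^ 6 ≤ 0.2372 ^ 6 := pow_le_pow_left₀ hp.le hp24 6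
  have c3 : 0 < p ^ 3 := pow_pos hp 3
  have a1 : (1 + p + 4 * p ^ 2) * (1 - p) ≤ 1.18 := by
    norm_num at a0; linarith
  have a2 : (1 + p + 3 * p ^ 2) * (1 - p) ≤ 1.12 := by
    norm_num at a0; linarith
  have b2 : 0 ≤ (1 + p + 3 * p ^ 2) * (1 - p) := mul_nonneg (by positivity) (by linarith)
  have m1 := mul_le_mul a1 a2 b2 (by norm_num)
  have m2 := mul_le_mul a1 a3 c3.le (by norm_num)
  norm_num at m1 m2 a4
  linarith

/-- The estimates needed when the family lies in neither `F_0` nor `F_1`, at a point `x ≥ p₀(t)`.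
For `t ≥ 20` they hold at `x = p₀(t)` with `α = x e^{1/t}`, so that `α ^ t = e x ^ t`;
the five remaining `t` are checked at a rational point. -/
lemma numeric (t : ℕ) (ht : 15 ≤ t) : ∃ x α : ℝ, p0 t ≤ x ∧ x ≤ 1 / 2 ∧ 0 ≤ α ∧ α ≤ 1 ∧
    x + (1 - x) * α ^ 3 ≤ α ∧
    α ^ t - (1 - x) * (x ^ t + t * (x ^ (t + 2) * (1 - x)) +
      (t * (t + 3) / 2) * (x ^ (t + 4) * (1 - x) ^ 2)) < x ^ t ∧
    ((t + 6) * (t + 5) / 2) * (x ^ (t + 4) * (1 - x) ^ 2) + (t + 6) * (x ^ (t + 5) * (1 - x)) +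
      x ^ (t + 6) < x ^ t := by
  rcases Nat.lt_or_ge t 20 with h20 | h20
  · interval_cases t
    · refine ⟨0.2738, 0.29186, p0_le_of ?_ ?_, ?_, ?_, ?_, ?_, ?_, ?_⟩ <;> norm_num
    · refine ⟨0.2652, 0.28162, p0_le_of ?_ ?_, ?_, ?_, ?_, ?_, ?_, ?_⟩ <;> norm_num
    · refine ⟨0.2573, 0.2723, p0_le_of ?_ ?_, ?_, ?_, ?_, ?_, ?_, ?_⟩ <;> norm_num
    · refine ⟨0.25, 0.26377, p0_le_of ?_ ?_, ?_, ?_, ?_, ?_, ?_, ?_⟩ <;> norm_num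
    · refine ⟨0.2434, 0.25612, p0_le_of ?_ ?_, ?_, ?_, ?_, ?_, ?_, ?_⟩ <;> norm_num
  · have htR : (20 : ℝ) ≤ t := by exact_mod_cast h20
    set p := p0 t with hpdef
    have hp : 0 < p := p0_pos t
    have hq : ((t : ℝ) + 2) * p ^ 2 = 1 + p := p0_eq t
    have hp24 : p ≤ 0.2372 := by
      apply p0_le_of (by norm_num); nlinarith
    set v : ℝ := 1 / t with hv
    have hv0 : 0 < v := by positivity
    have htv : t * v = 1 := by rw [hv]; field_simp
    have hv1 : v ≤ 1 / 20 := by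
      rw [hv]; exact one_div_le_one_div_of_le (by norm_num) htR
    set β := Real.exp v with hβ
    have hβlow : 1 + v + v ^ 2 / 2 ≤ β := Real.quadratic_le_exp_of_nonneg hv0.le
    have hβup : β * (1 - v) ≤ 1 := by
      have h1 : 1 - v ≤ Real.exp (-v) := by
        have := Real.add_one_le_exp (-v); linarith
      calc β * (1 - v) ≤ β * Real.exp (-v) :=
            mul_le_mul_of_nonneg_left h1 (Real.exp_pos _).le
        _ = 1 := by rw [hβ, ← Real.exp_add]; simp
    have hβ0 : 0 < β := Real.exp_pos _
    have hβt : β ^ t = Real.exp 1 := by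
      rw [hβ, ← Real.exp_nat_mul, htv]
    have hβ3 : β ^ 3 * (1 - v) ^ 3 ≤ 1 := by
      rw [← mul_pow]; exact pow_le_one₀ (mul_nonneg hβ0.le (by linarith)) hβup
    -- `t p² (1-p) = (1-p)² (1+2p) ≤ (1-v) / (1+2v)`
    have htw : t * (p ^ 2 * (1 - p)) = 1 - 3 * p ^ 2 + 2 * p ^ 3 := by
      linear_combination (1 - p) * hq
    have htw2 : t * (p ^ 2 * (1 - p)) * (1 + 2 * v) ≤ 1 - v := by
      have e : p ^ 2 * (1 + 2 * v) = (1 + p) * v := by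
        linear_combination v * hq - p ^ 2 * htv
      rw [htw]
      have : 3 * v ≤ (1 + p) * v * (3 - 2 * p) := by nlinarith [mul_pos hp hv0]
      calc (1 - 3 * p ^ 2 + 2 * p ^ 3) * (1 + 2 * v)
          = 1 + 2 * v - p ^ 2 * (1 + 2 * v) * (3 - 2 * p) := by ring
        _ ≤ 1 - v := by rw [e]; linarith
    have hw : p ^ 2 * (1 - p) * (1 + 2 * v) ≤ v * (1 - v) := by
      have := mul_le_mul_of_nonneg_left htw2 hv0.le
      calc p ^ 2 * (1 - p) * (1 + 2 * v) = v * (t * (p ^ 2 * (1 - p)) * (1 + 2 * v)) := by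
            linear_combination (-(p ^ 2 * (1 - p) * (1 + 2 * v))) * htv
        _ ≤ _ := this
    have hsup : 1 + p ^ 2 * (1 - p) * β ^ 3 ≤ β := by
      have h1 : p ^ 2 * (1 - p) * β ^ 3 * ((1 + 2 * v) * (1 - v) ^ 3) ≤ v * (1 - v) := by
        have hn : 0 ≤ p ^ 2 * (1 - p) * (1 + 2 * v) := by
          have : 0 ≤ 1 - p := by linarith
          positivity
        calc p ^ 2 * (1 - p) * β ^ 3 * ((1 + 2 * v) * (1 - v) ^ 3)
            = p ^ 2 * (1 - p) * (1 + 2 * v) * (β ^ 3 * (1 - v) ^ 3) := by ring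
          _ ≤ p ^ 2 * (1 - p) * (1 + 2 * v) * 1 := mul_le_mul_of_nonneg_left hβ3 hn
          _ ≤ v * (1 - v) := by linarith
      have hc : 0 < (1 + 2 * v) * (1 - v) ^ 3 := by
        have : 0 < 1 - v := by linarith
        positivity
      have h2 : v * (1 - v) ≤ (v + v ^ 2 / 2) * ((1 + 2 * v) * (1 - v) ^ 3) := by
        have h3 : 1 ≤ (1 + v / 2) * (1 - 3 * v ^ 2 + 2 * v ^ 3) := by
          nlinarith [mul_pos hv0 hv0, mul_pos hv0 (mul_pos hv0 hv0)]
        have h4 : 0 ≤ v * (1 - v) := mul_nonneg hv0.le (by linarith)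
        calc v * (1 - v) ≤ v * (1 - v) * ((1 + v / 2) * (1 - 3 * v ^ 2 + 2 * v ^ 3)) := by
              nlinarith
          _ = _ := by ring
      have := le_of_mul_le_mul_right (h1.trans h2) hc
      linarith
    have hpt : 0 < p ^ t := pow_pos hp t
    refine ⟨p, p * β, le_rfl, by linarith, by positivity, ?_, ?_, ?_, ?_⟩
    · have : β ≤ 2 := by nlinarith
      nlinarith
    · have := mul_le_mul_of_nonneg_left hsup hp.le
      nlinarith
    · rw [mul_pow, hβt]
      have hexp := Real.exp_one_lt_d9
      have f1 : 0.857 ≤ 1 - 3 * p ^ 2 + 2 * p ^ 3 := by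
        nlinarith [mul_nonneg (sub_nonneg.2 hp24) hp.le]
      have f2 : 0.986 ≤ 1 - p ^ 3 := by
        have : p ^ 3 ≤ 0.2372 ^ 3 := pow_le_pow_left₀ hp.le hp24 3
        norm_num at this ⊢; linarith
      have f3 : ((t : ℝ) + 3) * (p ^ 2 * (1 - p)) = 1 - p ^ 3 := by
        linear_combination (1 - p) * hq
      have key : Real.exp 1 - (1 - p) * (1 + t * (p ^ 2 * (1 - p)) +
          (t * (p ^ 2 * (1 - p))) * ((t + 3) * (p ^ 2 * (1 - p))) / 2) < 1 := by
        rw [f3, htw]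
        have f4 : 0.857 * 0.986 ≤ (1 - 3 * p ^ 2 + 2 * p ^ 3) * (1 - p ^ 3) :=
          mul_le_mul f1 f2 (by norm_num) (by linarith)
        nlinarith
      calc _ = p ^ t * (Real.exp 1 - (1 - p) * (1 + t * (p ^ 2 * (1 - p)) +
          (t * (p ^ 2 * (1 - p))) * ((t + 3) * (p ^ 2 * (1 - p))) / 2)) := by ring
        _ < p ^ t * 1 := mul_lt_mul_of_pos_left key hpt
        _ = p ^ t := mul_one _
    · have g1 : ((t : ℝ) + 6) * p ^ 2 = 1 + p + 4 * p ^ 2 := by linear_combination hq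
      have g2 : ((t : ℝ) + 5) * p ^ 2 = 1 + p + 3 * p ^ 2 := by linear_combination hq
      have key : (((t : ℝ) + 6) * p ^ 2) * ((t + 5) * p ^ 2) / 2 * (1 - p) ^ 2 +
          ((t + 6) * p ^ 2) * p ^ 3 * (1 - p) + p ^ 6 < 1 := by
        rw [g1, g2]
        exact numeric_F2 hp hp24
      calc _ = p ^ t * ((((t : ℝ) + 6) * p ^ 2) * ((t + 5) * p ^ 2) / 2 * (1 - p) ^ 2 +
          ((t + 6) * p ^ 2) * p ^ 3 * (1 - p) + p ^ 6) := by ring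
        _ < p ^ t * 1 := mul_lt_mul_of_pos_left key hpt
        _ = p ^ t := mul_one _

/-! ### Shifted families -/

lemma Icc_union_Ioc {k N : ℕ} (hk : k ≤ N) : Icc 1 N = Icc 1 k ∪ Ioc k N := by
  ext x; simp only [mem_union, mem_Icc, mem_Ioc]; omega

lemma disj_Icc_Ioc (k N : ℕ) : Disjoint (Icc 1 k) (Ioc k N) := by
  rw [disjoint_left]
  intro x hx hx'
  rw [mem_Icc] at hx
  rw [mem_Ioc] at hx'
  omega

lemma sdiff_prefix {k N : ℕ} (A : Finset ℕ) {B : Finset ℕ} (hB : B ⊆ Ioc k N) :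
    Icc 1 k \ (A ∪ B) = Icc 1 k \ A := by
  ext x
  have := @hB x
  simp only [mem_sdiff, mem_union, mem_Icc, mem_Ioc] at *
  grind

lemma pr_prefix (p : ℝ) {k N : ℕ} (hk : k ≤ N) (𝒟 : Finset (Finset ℕ)) :
    pr p (Icc 1 N) (fun G => Icc 1 k \ G ∈ 𝒟) = pr p (Icc 1 k) (fun A => Icc 1 k \ A ∈ 𝒟) := by
  unfold pr
  rw [Icc_union_Ioc hk, ev_union p (disj_Icc_Ioc k N)]
  refine ev_congr fun A _ => ?_
  rw [← ev_const p (ind (Icc 1 k \ A ∈ 𝒟)) (Ioc k N)]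
  refine ev_congr fun B hB => ?_
  simp only [sdiff_prefix A hB]

/-- The probability that the set of elements missing from `[k]` belongs to `𝒟`. -/
lemma pr_type (p : ℝ) {k N s : ℕ} (hk : k ≤ N) (𝒟 : Finset (Finset ℕ))
    (h𝒟 : ∀ D ∈ 𝒟, D ⊆ Icc 1 k ∧ D.card = s) :
    pr p (Icc 1 N) (fun G => Icc 1 k \ G ∈ 𝒟) = 𝒟.card * (p ^ (k - s) * (1 - p) ^ s) := by
  rw [pr_prefix p hk, pr, ev]
  have h1 : ∑ G ∈ (Icc 1 k).powerset, p ^ G.card * (1 - p) ^ ((Icc 1 k).card - G.card) *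
      ind (Icc 1 k \ G ∈ 𝒟) = ∑ D ∈ (Icc 1 k).powerset,
      p ^ (k - D.card) * (1 - p) ^ D.card * ind (D ∈ 𝒟) := by
    refine sum_nbij' (fun G => Icc 1 k \ G) (fun G => Icc 1 k \ G) ?_ ?_ ?_ ?_ ?_
    · intro G _; simp
    · intro G _; simp
    · intro G hG; exact Finset.sdiff_sdiff_eq_self (mem_powerset.1 hG)
    · intro G hG; exact Finset.sdiff_sdiff_eq_self (mem_powerset.1 hG)
    · intro G hG
      have h2 := card_le_card (mem_powerset.1 hG)
      rw [card_sdiff_of_subset (mem_powerset.1 hG)]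
      rw [Nat.card_Icc, Nat.add_sub_cancel] at *
      rw [Nat.sub_sub_self h2]
  rw [h1, ← sum_subset (s₁ := 𝒟) (fun D hD => mem_powerset.2 (h𝒟 D hD).1)]
  · rw [sum_congr rfl (g := fun _ => p ^ (k - s) * (1 - p) ^ s), sum_const, nsmul_eq_mul]
    intro D hD
    rw [(h𝒟 D hD).2, ind_true hD, mul_one]
  · intro D _ hD
    rw [ind_false hD, mul_zero]

/-- If the continuations of every prefix with missing set in `𝒟` intersect, only a proportion
`p` of the sets with such a prefix can belong to the family. -/
lemma pr_type_le {p : ℝ} (hp : 0 < p) (hp2 : p ≤ 1 / 2) {k N : ℕ} (hk : k ≤ N)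
    {𝒢 : Finset (Finset ℕ)} (hU : InclMaximal N 𝒢) (𝒟 : Finset (Finset ℕ))
    (hT : ∀ D ∈ 𝒟, ∀ A B : Finset ℕ, A ⊆ Ioc k N → B ⊆ Ioc k N → (Icc 1 k \ D) ∪ A ∈ 𝒢 →
      (Icc 1 k \ D) ∪ B ∈ 𝒢 → (A ∩ B).Nonempty) :
    pr p (Icc 1 N) (fun G => G ∈ 𝒢 ∧ Icc 1 k \ G ∈ 𝒟) ≤
      p * pr p (Icc 1 N) (fun G => Icc 1 k \ G ∈ 𝒟) := by
  rw [pr_prefix p hk]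
  unfold pr
  rw [← ev_smul]
  nth_rewrite 1 [Icc_union_Ioc hk]
  rw [ev_union p (disj_Icc_Ioc k N)]
  refine ev_mono hp.le (by linarith) fun A hA => ?_
  by_cases h : Icc 1 k \ A ∈ 𝒟
  · rw [ind_true h, mul_one]
    have e : Icc 1 k \ (Icc 1 k \ A) = A := Finset.sdiff_sdiff_eq_self hA
    have := pr_intersecting hp hp2 (Ioc k N) (fun B => A ∪ B ∈ 𝒢)
      (fun B B' hBB hB' hB => hU _ hB _ (union_subset_union_right hBB) (by
        rw [Icc_union_Ioc hk]; exact union_subset_union hA hB'))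
      (fun B B' hB hB' h1 h2 => hT _ h B B' hB hB' (by rwa [e]) (by rwa [e]))
    refine le_trans (ev_mono hp.le (by linarith) fun B _ => ?_) this
    exact ind_mono fun h => h.1
  · rw [ind_false h, mul_zero]
    refine le_of_eq ?_
    rw [← ev_const p 0 (Ioc k N)]
    refine ev_congr fun B hB => ?_
    simp only [sdiff_prefix A hB]
    exact ind_false fun hmem => h hmem.2

/-- The binomial upper tail, as the measure of `{G : m ≤ |G ∩ [k]|}`. -/
lemma pr_cnt (p : ℝ) {k N : ℕ} (hk : k ≤ N) (m : ℕ) :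
    pr p (Icc 1 N) (fun G => m ≤ cnt G k) =
      ∑ j ∈ range (k + 1), (k.choose j : ℝ) * (p ^ j * (1 - p) ^ (k - j) * ind (m ≤ j)) := by
  unfold pr
  rw [Icc_union_Ioc hk, ev_union p (disj_Icc_Ioc k N)]
  have : ∀ A ⊆ Icc 1 k, ev p (Ioc k N) (fun B => ind (m ≤ cnt (A ∪ B) k)) = ind (m ≤ A.card) := by
    intro A hA
    rw [← ev_const p (ind (m ≤ A.card)) (Ioc k N)]
    refine ev_congr fun B hB => ?_
    have : (A ∪ B) ∩ Icc 1 k = A := by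
      ext x
      have h1 := @hA x
      have h2 := @hB x
      simp only [mem_inter, mem_union, mem_Icc, mem_Ioc] at *
      grind
    rw [cnt, this]
  rw [ev_congr this, ev]
  have := sum_powerset_apply_card
    (fun j => p ^ j * (1 - p) ^ (k - j) * ind (m ≤ j)) (x := Icc 1 k)
  simp only [Nat.card_Icc, Nat.add_sub_cancel, nsmul_eq_mul] at this ⊢
  exact this

lemma pr_F0 (p : ℝ) {t N : ℕ} (hN : t ≤ N) :
    pr p (Icc 1 N) (fun G => t ≤ cnt G t) = p ^ t := by
  rw [pr_cnt p hN, sum_range_succ, sum_eq_zero]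
  · rw [ind_true le_rfl]; simp
  · intro j hj
    rw [ind_false (by simp at hj; omega)]; simp

lemma pr_F1 (p : ℝ) {t N : ℕ} (hN : t + 3 ≤ N) :
    pr p (Icc 1 N) (fun G => t + 2 ≤ cnt G (t + 3)) =
      (t + 3) * (p ^ (t + 2) * (1 - p)) + p ^ (t + 3) := by
  rw [pr_cnt p hN, sum_range_succ, sum_range_succ, sum_eq_zero]
  · rw [ind_true (by omega), ind_true (by omega), Nat.choose_succ_self_right,
      show t + 3 - (t + 2) = 1 by omega, Nat.choose_self, Nat.sub_self]
    push_cast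
    ring
  · intro j hj
    rw [ind_false (by simp at hj; omega)]; simp

lemma pr_F2 (p : ℝ) {t N : ℕ} (hN : t + 6 ≤ N) :
    pr p (Icc 1 N) (fun G => t + 4 ≤ cnt G (t + 6)) =
      ((t + 6) * (t + 5) / 2) * (p ^ (t + 4) * (1 - p) ^ 2) + (t + 6) * (p ^ (t + 5) * (1 - p)) +
      p ^ (t + 6) := by
  rw [pr_cnt p hN, sum_range_succ, sum_range_succ, sum_range_succ, sum_eq_zero]
  · rw [ind_true (by omega), ind_true (by omega), ind_true (by omega),
      Nat.choose_succ_self_right,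
      show (t + 6).choose (t + 4) = (t + 6).choose 2 from Nat.choose_symm_of_eq_add (by omega),
      Nat.cast_choose_two]
    have : t + 6 - (t + 4) = 2 := by omega
    simp [this]
    ring
  · intro j hj
    rw [ind_false (by simp at hj; omega)]; simp

/-- `μ(F_1) ≤ p ^ t` exactly when `(t + 2) p² ≤ 1 + p`. -/
lemma F1_sub (p : ℝ) (t : ℕ) :
    ((t : ℝ) + 3) * (p ^ (t + 2) * (1 - p)) + p ^ (t + 3) - p ^ t =
      p ^ t * (1 - p) * ((t + 2) * p ^ 2 - (1 + p)) := by ring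

lemma F1_le {p : ℝ} {t : ℕ} (hp : 0 < p) (hp1 : p < 1) (h : p ^ t ≤
    ((t : ℝ) + 3) * (p ^ (t + 2) * (1 - p)) + p ^ (t + 3)) (hpp : p ≤ p0 t) : p = p0 t := by
  have h1 := F1_sub p t
  have h2 : 0 < p ^ t * (1 - p) := mul_pos (pow_pos hp t) (by linarith)
  have h3 : 0 ≤ ((t : ℝ) + 2) * p ^ 2 - (1 + p) := by
    by_contra hneg
    push Not at hneg
    have := mul_neg_of_pos_of_neg h2 hneg
    linarith
  exact le_antisymm hpp (p0_le_of hp (by linarith))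

lemma p0_lt_half {t : ℕ} (ht : 15 ≤ t) : p0 t < 1 / 2 := by
  have htR : (15 : ℝ) ≤ t := by exact_mod_cast ht
  have : p0 t ≤ 0.4 := p0_le_of (by norm_num) (by nlinarith)
  linarith [this, (by norm_num : (0.4 : ℝ) < 1 / 2)]

/-- If `b`, `c`, `d` exclude one another and all of `a`, `b`, `c`, `d` imply `e`, then `a` is
covered by its intersections with `b`, `c`, `d` and the rest of `e`. -/
lemma ind_point {a b c d e : Prop} (ha : a → e) (hb : b → e) (hc : c → e) (hd : d → e)
    (hbc : b → c → False) (hbd : b → d → False) (hcd : c → d → False) :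
    ind a ≤ ((ind (a ∧ b) + ind (a ∧ c)) + ind (a ∧ d)) + (((ind e - ind b) - ind c) - ind d) := by
  have mono : ∀ {q r : Prop}, (q → r) → ind q ≤ ind r := fun h => ind_mono h
  have key : ∀ q : Prop, ¬ a → ind (a ∧ q) = 0 := fun q h => ind_false fun h' => h h'.1
  have key' : ∀ q : Prop, a → ind (a ∧ q) = ind q := fun q h => by simp only [h, true_and]
  by_cases h : a
  · rw [key' b h, key' c h, key' d h, ind_true h, ind_true (ha h)]
    linarith
  · rw [key b h, key c h, key d h, ind_false h]
    by_cases h1 : b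
    · rw [ind_true h1, ind_true (hb h1), ind_false (hbc h1), ind_false (hbd h1)]; norm_num
    · by_cases h2 : c
      · rw [ind_false h1, ind_true h2, ind_true (hc h2), ind_false (hcd h2)]; norm_num
      · rw [ind_false h1, ind_false h2]
        linarith [mono hd]

/-- The case of a shifted family contained in none of `F_0`, `F_1`, `F_2`. All walks reach
`y = 2x + t`; among the walks whose first visit is at height `t`, `t + 2` or `t + 4` (the last
with `t` prefixes left out) at most a proportion `p` belongs to the family. -/
lemma generic_bound {x α : ℝ} (hx0 : 0 < x) (hx2 : x ≤ 1 / 2) (hα0 : 0 ≤ α) (hα1 : α ≤ 1)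
    (hα : x + (1 - x) * α ^ 3 ≤ α) {t N : ℕ} (ht : 1 ≤ t) (hN : t + 6 ≤ N)
    {𝒢 : Finset (Finset ℕ)} (hF : FamilyOn N 𝒢) (hS : Shifted N 𝒢) (hU : InclMaximal N 𝒢)
    (hI : Intersecting3 t 𝒢) (h0 : ∃ G ∈ 𝒢, cnt G t < t) (h1 : ∃ G ∈ 𝒢, cnt G (t + 3) < t + 2)
    (h2 : ∃ G ∈ 𝒢, cnt G (t + 6) < t + 4) :
    pr x (Icc 1 N) (· ∈ 𝒢) ≤ α ^ t - (1 - x) * (x ^ t + t * (x ^ (t + 2) * (1 - x)) +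
      (t * (t + 3) / 2) * (x ^ (t + 4) * (1 - x) ^ 2)) := by
  obtain ⟨G₀, hG₀, hc₀⟩ := h0
  obtain ⟨G₁, hG₁, hc₁⟩ := h1
  obtain ⟨G₂, hG₂, hc₂⟩ := h2
  have m0 := tail_mem ht hF hS hU hG₀ hc₀
  have m1 := tail_mem (by omega) hF hS hU hG₁ hc₁
  have m2 := tail_mem (by omega) hF hS hU hG₂ hc₂
  set 𝒟₀ : Finset (Finset ℕ) := {∅} with h𝒟₀
  set 𝒟₁ : Finset (Finset ℕ) := powersetCard 1 (Icc 1 t) with h𝒟₁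
  set 𝒟₂ : Finset (Finset ℕ) := (powersetCard 2 (Icc 1 (t + 2))).erase {t + 1, t + 2} with h𝒟₂
  have s0 : ∀ D ∈ 𝒟₀, D ⊆ Icc 1 t ∧ D.card = 0 := by
    intro D hD; rw [h𝒟₀, mem_singleton] at hD; simp [hD]
  have s1' : ∀ D ∈ 𝒟₁, D ⊆ Icc 1 t ∧ D.card = 1 := fun D hD => mem_powersetCard.1 hD
  have s1 : ∀ D ∈ 𝒟₁, D ⊆ Icc 1 (t + 3) ∧ D.card = 1 := fun D hD =>
    ⟨(s1' D hD).1.trans (Icc_subset_Icc_right (by omega)), (s1' D hD).2⟩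
  have s2' : ∀ D ∈ 𝒟₂, D ⊆ Icc 1 (t + 2) ∧ D.card = 2 := fun D hD =>
    mem_powersetCard.1 (mem_of_mem_erase hD)
  have s2 : ∀ D ∈ 𝒟₂, D ⊆ Icc 1 (t + 6) ∧ D.card = 2 := fun D hD =>
    ⟨(s2' D hD).1.trans (Icc_subset_Icc_right (by omega)), (s2' D hD).2⟩
  have form2 : ∀ D ∈ 𝒟₂, ∃ a b, D = {a, b} ∧ 1 ≤ a ∧ a < b ∧ a ≤ t ∧ b ≤ t + 2 := by
    intro D hD
    obtain ⟨a, b, hab, rfl⟩ := card_eq_two.1 (s2' D hD).2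
    have hne := ne_of_mem_erase hD
    have ha := mem_Icc.1 ((s2' _ hD).1 (mem_insert_self a {b}))
    have hb := mem_Icc.1 ((s2' _ hD).1 (mem_insert_of_mem (mem_singleton_self b)))
    rcases lt_or_gt_of_ne hab with h | h
    · refine ⟨a, b, rfl, ha.1, h, ?_, hb.2⟩
      by_contra hat
      refine hne ?_
      rw [show a = t + 1 by omega, show b = t + 2 by omega]
    · refine ⟨b, a, pair_comm a b, hb.1, h, ?_, ha.2⟩
      by_contra hbt
      refine hne ?_
      rw [show b = t + 1 by omega, show a = t + 2 by omega, pair_comm]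
  have i0 := pr_type_le hx0 hx2 (by omega : t ≤ N) hU 𝒟₀ (by
    intro D hD A B hA hB
    rw [h𝒟₀, mem_singleton] at hD
    subst hD
    refine tails_intersect (by omega) hF hS hU hI (D₁ := ∅) (D₂ := ∅) (D₃ := Icc t t)
      (fun j => le_rfl) (fun j => le_rfl) m0 ?_ hA hB
    have e : Icc 1 t \ (∅ ∪ ∅ ∪ Icc t t) = Icc 1 (t - 1) := by
      ext y; simp only [mem_sdiff, mem_union, mem_Icc, notMem_empty, false_or]; omega
    rw [e, Nat.card_Icc]; omega)
  have i1 := pr_type_le hx0 hx2 (by omega : t + 3 ≤ N) hU 𝒟₁ (by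
    intro D hD A B hA hB
    obtain ⟨a, rfl⟩ := card_eq_one.1 (s1 D hD).2
    have ha := mem_Icc.1 ((s1' _ hD).1 (mem_singleton_self a))
    refine tails_intersect (by omega) hF hS hU hI (D₁ := {t}) (D₂ := {t + 1})
      (D₃ := Icc (t + 2) (t + 3)) (fun j => ?_) (fun j => ?_) m1 ?_ hA hB
    · rw [cnt_singleton ha.1, cnt_singleton (by omega)]; split_ifs <;> omega
    · rw [cnt_singleton ha.1, cnt_singleton (by omega)]; split_ifs <;> omega
    · have e : Icc 1 (t + 3) \ ({t} ∪ {t + 1} ∪ Icc (t + 2) (t + 3)) = Icc 1 (t - 1) := by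
        ext y; simp only [mem_sdiff, mem_union, mem_Icc, mem_singleton]; omega
      rw [e, Nat.card_Icc]; omega)
  have i2 := pr_type_le hx0 hx2 hN hU 𝒟₂ (by
    intro D hD A B hA hB
    obtain ⟨a, b, rfl, ha, hab, hat, hbt⟩ := form2 D hD
    refine tails_intersect hN hF hS hU hI (D₁ := {t, t + 2}) (D₂ := {t + 1, t + 3})
      (D₃ := Icc (t + 4) (t + 6)) (fun j => ?_) (fun j => ?_) m2 ?_ hA hB
    · rw [cnt_pair ha hab, cnt_pair (by omega) (by omega)]; split_ifs <;> omega
    · rw [cnt_pair ha hab, cnt_pair (by omega) (by omega)]; split_ifs <;> omega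
    · have e : Icc 1 (t + 6) \ ({t, t + 2} ∪ {t + 1, t + 3} ∪ Icc (t + 4) (t + 6)) =
          Icc 1 (t - 1) := by
        ext y; simp only [mem_sdiff, mem_union, mem_Icc, mem_singleton, mem_insert]; omega
      rw [e, Nat.card_Icc]; omega)
  have c0 := pr_type x (by omega : t ≤ N) 𝒟₀ s0
  have c1 := pr_type x (by omega : t + 3 ≤ N) 𝒟₁ s1
  have c2 := pr_type x hN 𝒟₂ s2
  have k0 : 𝒟₀.card = 1 := by rw [h𝒟₀, card_singleton]
  have k1 : 𝒟₁.card = t := by rw [h𝒟₁, card_powersetCard]; simp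
  have k2 : (𝒟₂.card : ℝ) = t * (t + 3) / 2 := by
    rw [h𝒟₂, card_erase_of_mem, card_powersetCard, Nat.card_Icc, Nat.add_sub_cancel,
      Nat.cast_sub, Nat.cast_choose_two]
    · push_cast; ring
    · exact Nat.choose_pos (by omega)
    · rw [mem_powersetCard]
      refine ⟨?_, card_pair (by omega)⟩
      intro y hy
      rw [mem_insert, mem_singleton] at hy
      rw [mem_Icc]; omega
  -- each of the three prefix types reaches the line, and they exclude one another
  have hhit : ∀ (k s : ℕ) (G : Finset ℕ), k ≤ N → k = t + 3 * s → (Icc 1 k \ G).card = s →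
      Hit t N G := by
    intro k s G hk hks hc
    refine ⟨k, hk, ?_⟩
    have e := card_sdiff_add_card_inter (Icc 1 k) G
    rw [hc, Nat.card_Icc, inter_comm] at e
    unfold cnt
    omega
  have d01 : ∀ G, Icc 1 t \ G ∈ 𝒟₀ → Icc 1 (t + 3) \ G ∈ 𝒟₁ → False := by
    intro G g0 g1
    rw [h𝒟₀, mem_singleton] at g0
    obtain ⟨a, ha⟩ := card_eq_one.1 (s1 _ g1).2
    have ham : a ∈ Icc 1 (t + 3) \ G := by rw [ha]; exact mem_singleton_self a
    have : a ∈ Icc 1 t \ G := mem_sdiff.2 ⟨(s1' _ g1).1 ham, (mem_sdiff.1 ham).2⟩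
    rw [g0] at this
    exact notMem_empty _ this
  have d02 : ∀ G, Icc 1 t \ G ∈ 𝒟₀ → Icc 1 (t + 6) \ G ∈ 𝒟₂ → False := by
    intro G g0 g2
    rw [h𝒟₀, mem_singleton] at g0
    obtain ⟨a, b, hD, ha, hab, hat, hbt⟩ := form2 _ g2
    have ham : a ∈ Icc 1 (t + 6) \ G := by rw [hD]; exact mem_insert_self a _
    have : a ∈ Icc 1 t \ G := mem_sdiff.2 ⟨mem_Icc.2 ⟨ha, hat⟩, (mem_sdiff.1 ham).2⟩
    rw [g0] at this
    exact notMem_empty _ this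
  have d12 : ∀ G, Icc 1 (t + 3) \ G ∈ 𝒟₁ → Icc 1 (t + 6) \ G ∈ 𝒟₂ → False := by
    intro G g1 g2
    have hsub : Icc 1 (t + 6) \ G ⊆ Icc 1 (t + 3) \ G := by
      intro y hy
      have := mem_Icc.1 ((s2' _ g2).1 hy)
      exact mem_sdiff.2 ⟨mem_Icc.2 ⟨this.1, by omega⟩, (mem_sdiff.1 hy).2⟩
    have := card_le_card hsub
    rw [(s1 _ g1).2, (s2 _ g2).2] at this
    omega
  have point : ∀ G ⊆ Icc 1 N, ind (G ∈ 𝒢) ≤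
      ((ind (G ∈ 𝒢 ∧ Icc 1 t \ G ∈ 𝒟₀) + ind (G ∈ 𝒢 ∧ Icc 1 (t + 3) \ G ∈ 𝒟₁)) +
        ind (G ∈ 𝒢 ∧ Icc 1 (t + 6) \ G ∈ 𝒟₂)) + (((ind (Hit t N G) - ind (Icc 1 t \ G ∈ 𝒟₀)) -
        ind (Icc 1 (t + 3) \ G ∈ 𝒟₁)) - ind (Icc 1 (t + 6) \ G ∈ 𝒟₂)) := by
    intro G _
    have q0 := d01 G
    have q1 := d02 G
    have q2 := d12 G
    have q3 := all_hit ht hF hS hU hI (G := G)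
    have q4 : Icc 1 t \ G ∈ 𝒟₀ → Hit t N G := fun h =>
      hhit t 0 G (by omega) (by omega) (s0 _ h).2
    have q5 : Icc 1 (t + 3) \ G ∈ 𝒟₁ → Hit t N G := fun h =>
      hhit (t + 3) 1 G (by omega) (by omega) (s1 _ h).2
    have q6 : Icc 1 (t + 6) \ G ∈ 𝒟₂ → Hit t N G := fun h =>
      hhit (t + 6) 2 G hN (by omega) (s2 _ h).2
    exact ind_point q3 q4 q5 q6 q0 q1 q2
  have tot := ev_mono hx0.le (by linarith : x ≤ 1) point
  rw [ev_add, ev_add, ev_add, ev_sub, ev_sub, ev_sub] at tot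
  have hh := pr_hit_le hx0.le (by linarith) hα0 hα1 hα ht N
  rw [c0, k0] at i0
  rw [c1, k1] at i1
  rw [c2, k2] at i2
  rw [k0] at c0
  rw [k1] at c1
  rw [k2] at c2
  simp only [Nat.sub_zero, Nat.cast_one,
    show t + 3 - 1 = t + 2 from rfl, show t + 6 - 2 = t + 4 from rfl] at c0 c1 c2 i0 i1 i2
  unfold pr at *
  simp only [] at *
  linarith

/-- The shifted case: a shifted increasing family of measure at least `p ^ t` contains `[t]`,
or `p = p₀(t)` and it contains all `(t + 2)`-subsets of `[t + 3]`. -/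
lemma shifted_case {t N : ℕ} (ht : 15 ≤ t) (hN : t + 6 ≤ N) {p : ℝ} (hp : 0 < p)
    (hpp : p ≤ p0 t) {𝒢 : Finset (Finset ℕ)} (hF : FamilyOn N 𝒢) (hS : Shifted N 𝒢)
    (hU : InclMaximal N 𝒢) (hI : Intersecting3 t 𝒢) (hm : p ^ t ≤ pr p (Icc 1 N) (· ∈ 𝒢)) :
    (∃ T ∈ 𝒢, T.card = t) ∨
      (p = p0 t ∧ ∃ S : Finset ℕ, S.card = t + 3 ∧ ∀ a ∈ S, S.erase a ∈ 𝒢) := by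
  have hp1 : p < 1 := by linarith [p0_lt_half ht]
  have hUp : ∀ A B, A ⊆ B → B ⊆ Icc 1 N → A ∈ 𝒢 → B ∈ 𝒢 := fun A B hAB hB hA => hU A hA B hAB hB
  by_cases h0 : ∃ G ∈ 𝒢, cnt G t < t
  swap
  · left
    push Not at h0
    refine ⟨Icc 1 t, ?_, by simp⟩
    refine pr_eq_imp hp hp1 (X := Icc 1 N) (P := (· ∈ 𝒢)) (Q := fun G => t ≤ cnt G t)
      (fun G _ hG => h0 G hG) (by rw [pr_F0 p (by omega)]; exact hm) _
      (Icc_subset_Icc_right (by omega)) ?_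
    simp [cnt]
  by_cases h1 : ∃ G ∈ 𝒢, cnt G (t + 3) < t + 2
  swap
  · right
    push Not at h1
    have hle := pr_mono hp.le hp1.le (X := Icc 1 N) (P := (· ∈ 𝒢))
      (Q := fun G => t + 2 ≤ cnt G (t + 3)) (fun G _ hG => h1 G hG)
    rw [pr_F1 p (by omega)] at hle
    have hpe := F1_le hp hp1 (hm.trans hle) hpp
    refine ⟨hpe, Icc 1 (t + 3), by simp, fun a ha => ?_⟩
    refine pr_eq_imp hp hp1 (X := Icc 1 N) (P := (· ∈ 𝒢)) (Q := fun G => t + 2 ≤ cnt G (t + 3))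
      (fun G _ hG => h1 G hG) ?_ _
      ((erase_subset _ _).trans (Icc_subset_Icc_right (by omega))) ?_
    · rw [pr_F1 p (by omega)]
      have e1 := F1_sub p t
      have e2 := p0_eq t
      rw [← hpe] at e2
      rw [e2, sub_self, mul_zero] at e1
      linarith
    · show t + 2 ≤ cnt _ _
      rw [cnt_subset (erase_subset a (Icc 1 (t + 3))) le_rfl, card_erase_of_mem ha]
      simp
  exfalso
  obtain ⟨x, α, hx, hx2, hα0, hα1, hα, n1, n2⟩ := numeric t ht
  have hpx : p ≤ x := hpp.trans hx
  have hlt : pr x (Icc 1 N) (· ∈ 𝒢) < x ^ t := by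
    by_cases h2 : ∃ G ∈ 𝒢, cnt G (t + 6) < t + 4
    · exact (generic_bound (hp.trans_le hpx) hx2 hα0 hα1 hα (by omega) hN hF hS hU hI h0 h1
        h2).trans_lt n1
    · push Not at h2
      refine lt_of_le_of_lt (pr_mono (hp.le.trans hpx) (by linarith)
        (Q := fun G => t + 4 ≤ cnt G (t + 6)) (fun G _ hG => h2 G hG)) ?_
      rw [pr_F2 x hN]
      exact n2
  exact absurd hm (not_le.2 (pr_lt_of_le hp hpx (by linarith) t (Icc 1 N) _ hUp hlt))

/-! ### Shifting -/

/-- The set `A` with the elements `i` and `j` interchanged. -/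
def sw (i j : ℕ) (A : Finset ℕ) : Finset ℕ := A.image (Equiv.swap i j)

lemma mem_sw {i j x : ℕ} {A : Finset ℕ} : x ∈ sw i j A ↔ Equiv.swap i j x ∈ A := by
  rw [sw, mem_image]
  constructor
  · rintro ⟨y, hy, rfl⟩; rwa [Equiv.swap_apply_self]
  · intro h; exact ⟨_, h, Equiv.swap_apply_self i j x⟩

lemma mem_sw_left {i j : ℕ} {A : Finset ℕ} : i ∈ sw i j A ↔ j ∈ A := by
  rw [mem_sw, Equiv.swap_apply_left]

lemma mem_sw_right {i j : ℕ} {A : Finset ℕ} : j ∈ sw i j A ↔ i ∈ A := by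
  rw [mem_sw, Equiv.swap_apply_right]

lemma mem_sw_of_ne {i j x : ℕ} {A : Finset ℕ} (hi : x ≠ i) (hj : x ≠ j) :
    x ∈ sw i j A ↔ x ∈ A := by
  rw [mem_sw, Equiv.swap_apply_of_ne_of_ne hi hj]

lemma sw_sw (i j : ℕ) (A : Finset ℕ) : sw i j (sw i j A) = A := by
  ext x; rw [mem_sw, mem_sw, Equiv.swap_apply_self]

lemma card_sw (i j : ℕ) (A : Finset ℕ) : (sw i j A).card = A.card :=
  card_image_of_injective _ (Equiv.injective _)

lemma sw_mono (i j : ℕ) {A B : Finset ℕ} (h : A ⊆ B) : sw i j A ⊆ sw i j B :=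
  image_subset_image h

lemma sw_eq_self {i j : ℕ} {A : Finset ℕ} (h : i ∈ A ↔ j ∈ A) : sw i j A = A := by
  ext x
  by_cases hi : x = i
  · subst hi; rw [mem_sw_left, h]
  by_cases hj : x = j
  · subst hj; rw [mem_sw_right, h]
  exact mem_sw_of_ne hi hj

lemma sw_erase (i j a : ℕ) (S : Finset ℕ) :
    sw i j (S.erase a) = (sw i j S).erase (Equiv.swap i j a) := by
  ext x
  rw [mem_sw, mem_erase, mem_erase, mem_sw, ne_eq, ne_eq, Equiv.swap_apply_eq_iff]

lemma sw_subset_Icc {i j N : ℕ} (hi : 1 ≤ i) (hij : i < j) (hj : j ≤ N) {A : Finset ℕ}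
    (hA : A ⊆ Icc 1 N) : sw i j A ⊆ Icc 1 N := by
  intro x hx
  by_cases h1 : x = i
  · rw [mem_Icc]; omega
  by_cases h2 : x = j
  · rw [mem_Icc]; omega
  exact hA ((mem_sw_of_ne h1 h2).1 hx)

lemma sw_eq_insert_erase {i j : ℕ} {A : Finset ℕ} (hj : j ∈ A) (hi : i ∉ A) :
    sw i j A = insert i (A.erase j) := by
  ext x
  rw [mem_insert, mem_erase]
  by_cases h1 : x = i
  · subst h1; simp [mem_sw_left, hj]
  by_cases h2 : x = j
  · subst h2; simp [mem_sw_right, hi, h1]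
  simp [mem_sw_of_ne h1 h2, h1, h2]

/-- The image of `𝒢` under the shift `σ_{i,j}`. Of a pair `A`, `sw i j A` with exactly one
member in `𝒢`, the set containing `i` is kept. -/
def shiftFam (N i j : ℕ) (𝒢 : Finset (Finset ℕ)) : Finset (Finset ℕ) :=
  (Icc 1 N).powerset.filter fun A => (A ∈ 𝒢 ∧ sw i j A ∈ 𝒢) ∨
    ((j ∈ A → i ∈ A) ∧ (A ∈ 𝒢 ∨ sw i j A ∈ 𝒢))

lemma mem_shiftFam {N i j : ℕ} {𝒢 : Finset (Finset ℕ)} {A : Finset ℕ} :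
    A ∈ shiftFam N i j 𝒢 ↔ A ⊆ Icc 1 N ∧ ((A ∈ 𝒢 ∧ sw i j A ∈ 𝒢) ∨
    ((j ∈ A → i ∈ A) ∧ (A ∈ 𝒢 ∨ sw i j A ∈ 𝒢))) := by
  rw [shiftFam, mem_filter, mem_powerset]

/-- The sum of all elements of all members; it drops under every effective shift. -/
def potential (𝒢 : Finset (Finset ℕ)) : ℕ := ∑ G ∈ 𝒢, ∑ x ∈ G, x

section shift

variable {N i j : ℕ} {𝒢 : Finset (Finset ℕ)}

lemma sum_powerset_sw {M : Type*} [AddCommMonoid M] (hi : 1 ≤ i) (hij : i < j) (hj : j ≤ N)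
    (f : Finset ℕ → M) :
    ∑ A ∈ (Icc 1 N).powerset, f (sw i j A) = ∑ A ∈ (Icc 1 N).powerset, f A := by
  refine sum_nbij' (sw i j) (sw i j) ?_ ?_ ?_ ?_ ?_
  · intro A hA; rw [mem_powerset] at *; exact sw_subset_Icc hi hij hj hA
  · intro A hA; rw [mem_powerset] at *; exact sw_subset_Icc hi hij hj hA
  · intro A _; exact sw_sw i j A
  · intro A _; exact sw_sw i j A
  · intro A _; rfl

lemma shiftFam_ind (hi : 1 ≤ i) (hij : i < j) (hj : j ≤ N) {A : Finset ℕ} (hA : A ⊆ Icc 1 N) :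
    ind (A ∈ shiftFam N i j 𝒢) + ind (sw i j A ∈ shiftFam N i j 𝒢) =
      ind (A ∈ 𝒢) + ind (sw i j A ∈ 𝒢) := by
  have hA' := sw_subset_Icc hi hij hj hA
  rw [mem_shiftFam, mem_shiftFam, sw_sw, mem_sw_left, mem_sw_right]
  by_cases h : i ∈ A ↔ j ∈ A
  · rw [sw_eq_self h]
    by_cases h1 : A ∈ 𝒢 <;> simp [ind, hA, h, h1]
  · by_cases h1 : A ∈ 𝒢 <;> by_cases h2 : sw i j A ∈ 𝒢 <;> by_cases h3 : i ∈ A <;>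
      by_cases h4 : j ∈ A <;> simp_all [ind]

lemma pr_shiftFam (p : ℝ) (hi : 1 ≤ i) (hij : i < j) (hj : j ≤ N) :
    pr p (Icc 1 N) (· ∈ shiftFam N i j 𝒢) = pr p (Icc 1 N) (· ∈ 𝒢) := by
  have inv : ∀ f : Finset ℕ → ℝ, ev p (Icc 1 N) (fun A => f (sw i j A)) = ev p (Icc 1 N) f := by
    intro f
    unfold ev
    rw [← sum_powerset_sw hi hij hj]
    simp only [card_sw, sw_sw]
  have h := ev_congr (p := p) (X := Icc 1 N) (fun A hA => shiftFam_ind (𝒢 := 𝒢) hi hij hj hA)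
  rw [ev_add, ev_add, inv (fun A => ind (A ∈ shiftFam N i j 𝒢)), inv (fun A => ind (A ∈ 𝒢))] at h
  unfold pr
  linarith

lemma sum_sw_lt (hij : i < j) {A : Finset ℕ} (hjA : j ∈ A) (hiA : i ∉ A) :
    ∑ x ∈ sw i j A, x < ∑ x ∈ A, x := by
  rw [sw_eq_insert_erase hjA hiA, sum_insert (fun h => hiA (mem_of_mem_erase h)),
    ← add_sum_erase A _ hjA]
  omega

lemma potential_eq (hF : FamilyOn N 𝒢) : potential 𝒢 =
    ∑ A ∈ (Icc 1 N).powerset, if A ∈ 𝒢 then ∑ x ∈ A, x else 0 := by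
  rw [potential, ← sum_filter]
  congr 1
  ext A
  rw [mem_filter, mem_powerset]
  exact ⟨fun h => ⟨hF A h, h⟩, fun h => h.2⟩

lemma potential_lt (hi : 1 ≤ i) (hij : i < j) (hj : j ≤ N) (hF : FamilyOn N 𝒢) {G : Finset ℕ}
    (hG : G ∈ 𝒢) (hjG : j ∈ G) (hiG : i ∉ G) (hnG : sw i j G ∉ 𝒢) :
    potential (shiftFam N i j 𝒢) < potential 𝒢 := by
  set w : Finset ℕ → ℕ := fun A => ∑ x ∈ A, x with hw
  have dbl : ∀ ℋ : Finset (Finset ℕ), FamilyOn N ℋ → 2 * potential ℋ =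
      ∑ A ∈ (Icc 1 N).powerset, ((if A ∈ ℋ then w A else 0) +
        if sw i j A ∈ ℋ then w (sw i j A) else 0) := by
    intro ℋ hℋ
    rw [sum_add_distrib, sum_powerset_sw hi hij hj (fun A => if A ∈ ℋ then w A else 0),
      ← potential_eq hℋ]
    ring
  have hF' : FamilyOn N (shiftFam N i j 𝒢) := fun A hA => (mem_shiftFam.1 hA).1
  suffices 2 * potential (shiftFam N i j 𝒢) < 2 * potential 𝒢 by omega
  rw [dbl _ hF', dbl _ hF]
  refine sum_lt_sum (fun A hA => ?_) ⟨G, mem_powerset.2 (hF G hG), ?_⟩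
  · rw [mem_powerset] at hA
    have hA' := sw_subset_Icc hi hij hj hA
    simp only [mem_shiftFam, sw_sw, mem_sw_left, mem_sw_right]
    by_cases h : i ∈ A ↔ j ∈ A
    · rw [sw_eq_self h]
      by_cases h1 : A ∈ 𝒢 <;> simp [hA, h, h1]
    · by_cases h3 : i ∈ A
      · have h4 : j ∉ A := fun h4 => h ⟨fun _ => h4, fun _ => h3⟩
        have := sum_sw_lt (A := sw i j A) hij (mem_sw_right.2 h3) (fun h' => h4 (mem_sw_left.1 h'))
        rw [sw_sw] at this
        by_cases h1 : A ∈ 𝒢 <;> by_cases h2 : sw i j A ∈ 𝒢 <;> simp [hA, hA', h1, h2, h3, h4, hw]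
        omega
      · have h4 : j ∈ A := by by_contra h4; exact h ⟨fun h' => absurd h' h3, fun h' => absurd h' h4⟩
        have := sum_sw_lt hij h4 h3
        by_cases h1 : A ∈ 𝒢 <;> by_cases h2 : sw i j A ∈ 𝒢 <;> simp [hA, hA', h1, h2, h3, h4, hw]
        omega
  · have := sum_sw_lt hij hjG hiG
    have hG' := sw_subset_Icc hi hij hj (hF G hG)
    simp only [mem_shiftFam, sw_sw, mem_sw_left, mem_sw_right]
    simp [hF G hG, hG', hG, hnG, hjG, hiG, hw]
    omega

lemma inclMaximal_shiftFam (hi : 1 ≤ i) (hij : i < j) (hj : j ≤ N) (hU : InclMaximal N 𝒢) :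
    InclMaximal N (shiftFam N i j 𝒢) := by
  intro A hA B hAB hB
  have hB' := sw_subset_Icc hi hij hj hB
  have u1 : A ∈ 𝒢 → B ∈ 𝒢 := fun h => hU A h B hAB hB
  have u2 : sw i j A ∈ 𝒢 → sw i j B ∈ 𝒢 := fun h => hU _ h _ (sw_mono i j hAB) hB'
  rw [mem_shiftFam] at hA ⊢
  refine ⟨hB, ?_⟩
  rcases hA.2 with ⟨h1, h2⟩ | ⟨h1, h2⟩
  · exact Or.inl ⟨u1 h1, u2 h2⟩
  · by_cases hBj : j ∈ B → i ∈ B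
    · exact Or.inr ⟨hBj, h2.imp u1 u2⟩
    · -- here `A` contains neither `i` nor `j`, so it is fixed by the interchange
      push Not at hBj
      have hiA : i ∉ A := fun h => hBj.2 (hAB h)
      have hjA : j ∉ A := fun h => hiA (h1 h)
      have e : sw i j A = A := sw_eq_self ⟨fun h => absurd h hiA, fun h => absurd h hjA⟩
      rw [e, or_self] at h2
      exact Or.inl ⟨u1 h2, u2 (e.symm ▸ h2)⟩

/-- Each member `G` of the shifted family has a companion in `𝒢` contained, apart from `i`, in
`sw i j G`; if `G` is new, the companion also avoids `i`. -/
lemma companion {G : Finset ℕ} (hG : G ∈ shiftFam N i j 𝒢) :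
    ∃ H ∈ 𝒢, (∀ x, x ≠ i → x ≠ j → x ∈ H → x ∈ G) ∧ (j ∈ H → i ∈ G) ∧ (G ∉ 𝒢 → i ∉ H) := by
  obtain ⟨-, h⟩ := mem_shiftFam.1 hG
  have other : sw i j G ∈ 𝒢 → (G ∉ 𝒢 → j ∉ G) → ∃ H ∈ 𝒢, (∀ x, x ≠ i → x ≠ j → x ∈ H → x ∈ G) ∧
      (j ∈ H → i ∈ G) ∧ (G ∉ 𝒢 → i ∉ H) := fun h1 h2 =>
    ⟨sw i j G, h1, fun x hi hj hx => (mem_sw_of_ne hi hj).1 hx, mem_sw_right.1, fun h3 h4 =>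
      h2 h3 (mem_sw_left.1 h4)⟩
  rcases h with ⟨h1, h2⟩ | ⟨h1, h2⟩
  · exact other h2 fun h => absurd h1 h
  · by_cases h3 : G ∈ 𝒢
    · exact ⟨G, h3, fun x _ _ hx => hx, h1, fun h => absurd h3 h⟩
    · have h4 := h2.resolve_left h3
      refine other h4 fun _ hjG => h3 ?_
      rwa [sw_eq_self ⟨fun _ => hjG, fun _ => h1 hjG⟩] at h4

lemma intersecting_shiftFam {t : ℕ} (hI : Intersecting3 t 𝒢) :
    Intersecting3 t (shiftFam N i j 𝒢) := by
  intro A hA B hB C hC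
  by_cases hall : A ∈ 𝒢 ∧ B ∈ 𝒢 ∧ C ∈ 𝒢
  · exact hI A hall.1 B hall.2.1 C hall.2.2
  obtain ⟨A', hA', a1, a2, a3⟩ := companion hA
  obtain ⟨B', hB', b1, b2, b3⟩ := companion hB
  obtain ⟨C', hC', c1, c2, c3⟩ := companion hC
  refine (hI A' hA' B' hB' C' hC').trans ?_
  rw [← card_sw i j (A ∩ B ∩ C)]
  refine card_le_card fun x hx => ?_
  simp only [mem_inter] at hx
  by_cases hxi : x = i
  · subst hxi
    exact absurd ⟨not_not.1 fun h => a3 h hx.1.1, not_not.1 fun h => b3 h hx.1.2,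
      not_not.1 fun h => c3 h hx.2⟩ hall
  by_cases hxj : x = j
  · subst hxj
    rw [mem_sw_right]
    simp only [mem_inter]
    exact ⟨⟨a2 hx.1.1, b2 hx.1.2⟩, c2 hx.2⟩
  · rw [mem_sw_of_ne hxi hxj]
    simp only [mem_inter]
    exact ⟨⟨a1 x hxi hxj hx.1.1, b1 x hxi hxj hx.1.2⟩, c1 x hxi hxj hx.2⟩

/-- If the shifted family contains all `(t + 2)`-subsets of a `(t + 3)`-set `S`, then `𝒢` contains
all `(t + 2)`-subsets of `S` or of `sw i j S`. -/
lemma unshift_F1 {t : ℕ} (ht : 1 ≤ t) (hij : i < j) (hI : Intersecting3 t 𝒢) {S : Finset ℕ}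
    (hc : S.card = t + 3) (hS : ∀ a ∈ S, S.erase a ∈ shiftFam N i j 𝒢) :
    ∃ S : Finset ℕ, S.card = t + 3 ∧ ∀ a ∈ S, S.erase a ∈ 𝒢 := by
  have key : ∀ a ∈ S, (S.erase a ∈ 𝒢 ∧ sw i j (S.erase a) ∈ 𝒢) ∨
      ((j ∈ S.erase a → i ∈ S.erase a) ∧ (S.erase a ∈ 𝒢 ∨ sw i j (S.erase a) ∈ 𝒢)) :=
    fun a ha => (mem_shiftFam.1 (hS a ha)).2
  by_cases hij' : i ∈ S ∧ j ∉ S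
  swap
  · refine ⟨S, hc, fun a ha => ?_⟩
    rcases key a ha with h | ⟨h1, h2 | h2⟩
    · exact h.1
    · exact h2
    · by_cases hsame : i ∈ S.erase a ↔ j ∈ S.erase a
      · rwa [sw_eq_self hsame] at h2
      · -- `S.erase a` contains `i` but not `j`; hence `a = j` and `S.erase i` decides
        have hia : i ∈ S.erase a := by
          by_contra h
          exact hsame ⟨fun h' => absurd h' h, h1⟩
        have hja : j ∉ S.erase a := fun h => hsame ⟨fun _ => h, fun _ => hia⟩
        have hiS := mem_of_mem_erase hia
        have hjS : j ∈ S := by by_contra h; exact hij' ⟨hiS, h⟩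
        have haj : a = j := by
          by_contra h
          exact hja (mem_erase.2 ⟨fun h' => h h'.symm, hjS⟩)
        subst haj
        rcases key i hiS with h | ⟨h3, -⟩
        · have := h.2
          rwa [sw_erase, Equiv.swap_apply_left, sw_eq_self ⟨fun _ => hjS, fun _ => hiS⟩] at this
        · exact absurd (h3 (mem_erase.2 ⟨hij.ne', hjS⟩)) (notMem_erase i S)
  · obtain ⟨hiS, hjS⟩ := hij'
    have hi𝒢 : S.erase i ∈ 𝒢 := by
      have e : sw i j (S.erase i) = S.erase i := sw_eq_self
        ⟨fun h => absurd h (notMem_erase i S), fun h => absurd (mem_of_mem_erase h) hjS⟩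
      rcases key i hiS with h | ⟨-, h⟩
      · exact h.1
      · rwa [e, or_self] at h
    have hor : ∀ a ∈ S, S.erase a ∈ 𝒢 ∨ sw i j (S.erase a) ∈ 𝒢 := fun a ha => by
      rcases key a ha with h | h
      · exact Or.inl h.1
      · exact h.2
    have memsw : ∀ a x, x ∈ sw i j (S.erase a) → x = j ∨ (x ∈ S ∧ x ≠ a ∧ x ≠ i) := by
      intro a x hx
      by_cases h1 : x = j
      · exact Or.inl h1
      by_cases h2 : x = i
      · subst h2; exact absurd (mem_of_mem_erase (mem_sw_left.1 hx)) hjS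
      · rw [mem_sw_of_ne h2 h1, mem_erase] at hx
        exact Or.inr ⟨hx.2, hx.1, h2⟩
    by_cases hall : ∀ a ∈ S, S.erase a ∈ 𝒢
    · exact ⟨S, hc, hall⟩
    · push Not at hall
      obtain ⟨x, hx, hx𝒢⟩ := hall
      have hxi : x ≠ i := fun h => hx𝒢 (h ▸ hi𝒢)
      have hx' := (hor x hx).resolve_left hx𝒢
      -- otherwise three members meet in `S` minus four elements
      have hall' : ∀ y ∈ S, y ≠ i → sw i j (S.erase y) ∈ 𝒢 := by
        intro y hy hyi
        by_contra hy𝒢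
        have hy' := (hor y hy).resolve_right hy𝒢
        have hxy : x ≠ y := fun h => hy𝒢 (h ▸ hx')
        have hcard : (((S.erase i).erase x).erase y).card = t := by
          rw [card_erase_of_mem, card_erase_of_mem, card_erase_of_mem hiS, hc]
          · omega
          · exact mem_erase.2 ⟨hxi, hx⟩
          · exact mem_erase.2 ⟨hxy.symm, mem_erase.2 ⟨hyi, hy⟩⟩
        obtain ⟨z, hz⟩ : (((S.erase i).erase x).erase y).Nonempty := by
          rw [← card_pos, hcard]; omega
        have hzlt : ((((S.erase i).erase x).erase y).erase z).card < t := by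
          rw [card_erase_of_mem hz, hcard]; omega
        simp only [mem_erase] at hz
        refine absurd hzlt (not_lt.2 ?_)
        have fin : ∀ W ∈ 𝒢, (∀ u ∈ W, u = j ∨ (u ∈ S ∧ u ≠ z)) → t ≤
            ((((S.erase i).erase x).erase y).erase z).card := by
          intro W hW hWz
          refine (hI _ hx' _ hy' W hW).trans (card_le_card fun u hu => ?_)
          simp only [mem_inter] at hu
          have e1 := memsw x u hu.1.1
          have e2 := mem_erase.1 hu.1.2
          have e3 := hWz u hu.2
          have e4 : u ≠ j := fun h => hjS (h ▸ e2.2)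
          have e5 := e1.resolve_left e4
          have e6 := e3.resolve_left e4
          simp only [mem_erase]
          exact ⟨e6.2, e2.1, e5.2.1, e5.2.2, e2.2⟩
        rcases hor z hz.2.2.2 with h | h
        · exact fin _ h fun u hu => Or.inr ⟨mem_of_mem_erase hu, ne_of_mem_erase hu⟩
        · exact fin _ h fun u hu => (memsw z u hu).imp_right fun h => ⟨h.1, h.2.1⟩
      refine ⟨sw i j S, by rw [card_sw, hc], fun a ha => ?_⟩
      have ha' := mem_sw.1 ha
      have e : (sw i j S).erase a = sw i j (S.erase (Equiv.swap i j a)) := by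
        rw [sw_erase, Equiv.swap_apply_self]
      rw [e]
      by_cases h : Equiv.swap i j a = i
      · rw [h, sw_eq_self ⟨fun h => absurd h (notMem_erase i S),
          fun h => absurd (mem_of_mem_erase h) hjS⟩]
        exact hi𝒢
      · exact hall' _ ha' h

end shift

/-- `shifted_case` without the assumption that the family is shifted. -/
lemma increasing_case {t N : ℕ} (ht : 15 ≤ t) (hN : t + 6 ≤ N) {p : ℝ} (hp : 0 < p)
    (hpp : p ≤ p0 t) : ∀ (m : ℕ) (𝒢 : Finset (Finset ℕ)), potential 𝒢 = m → FamilyOn N 𝒢 →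
    InclMaximal N 𝒢 → Intersecting3 t 𝒢 → p ^ t ≤ pr p (Icc 1 N) (· ∈ 𝒢) →
    (∃ T ∈ 𝒢, T.card = t) ∨
      (p = p0 t ∧ ∃ S : Finset ℕ, S.card = t + 3 ∧ ∀ a ∈ S, S.erase a ∈ 𝒢) := by
  intro m
  induction m using Nat.strong_induction_on with
  | _ m ih =>
    intro 𝒢 hm hF hU hI hmeas
    by_cases hS : Shifted N 𝒢
    · exact shifted_case ht hN hp hpp hF hS hU hI hmeas
    unfold Shifted at hS
    push Not at hS
    obtain ⟨i, j, hi, hij, hj, G, hG, hjG, hiG, hnG⟩ := hS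
    rw [← sw_eq_insert_erase hjG hiG] at hnG
    have hlt := potential_lt hi hij hj hF hG hjG hiG hnG
    rcases ih _ (hm ▸ hlt) (shiftFam N i j 𝒢) rfl (fun A hA => (mem_shiftFam.1 hA).1)
      (inclMaximal_shiftFam hi hij hj hU) (intersecting_shiftFam hI)
      (by rwa [pr_shiftFam p hi hij hj]) with ⟨T, hT, hc⟩ | ⟨hpe, S, hc, hS⟩
    · left
      rcases (mem_shiftFam.1 hT).2 with h | ⟨-, h | h⟩
      · exact ⟨T, h.1, hc⟩
      · exact ⟨T, h, hc⟩
      · exact ⟨_, h, by rw [card_sw, hc]⟩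
    · exact Or.inr ⟨hpe, unshift_F1 (by omega) hij hI hc hS⟩

/-! ### Isomorphic copies and the theorem -/

lemma mu_eq_pr (p : ℝ) {n : ℕ} {𝒢 : Finset (Finset ℕ)} (hF : FamilyOn n 𝒢) :
    mu p n 𝒢 = pr p (Icc 1 n) (· ∈ 𝒢) := by
  rw [mu, pr, ev, ← sum_subset (s₁ := 𝒢) (fun G hG => mem_powerset.2 (hF G hG))]
  · refine sum_congr rfl fun G hG => ?_
    rw [ind_true hG, mul_one, Nat.card_Icc, Nat.add_sub_cancel]
  · intro G _ hG
    rw [ind_false hG, mul_zero]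

open Classical in
/-- The increasing family on `[N]` generated by `𝒢`. -/
noncomputable def upFam (N : ℕ) (𝒢 : Finset (Finset ℕ)) : Finset (Finset ℕ) :=
  (Icc 1 N).powerset.filter fun H => ∃ G ∈ 𝒢, G ⊆ H

lemma mem_upFam {N : ℕ} {𝒢 : Finset (Finset ℕ)} {H : Finset ℕ} :
    H ∈ upFam N 𝒢 ↔ H ⊆ Icc 1 N ∧ ∃ G ∈ 𝒢, G ⊆ H := by
  rw [upFam, mem_filter, mem_powerset]

lemma upFam_intersecting {N t : ℕ} {𝒢 : Finset (Finset ℕ)} (hI : Intersecting3 t 𝒢) :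
    Intersecting3 t (upFam N 𝒢) := by
  intro A hA B hB C hC
  obtain ⟨-, A', hA', a⟩ := mem_upFam.1 hA
  obtain ⟨-, B', hB', b⟩ := mem_upFam.1 hB
  obtain ⟨-, C', hC', c⟩ := mem_upFam.1 hC
  exact (hI A' hA' B' hB' C' hC').trans
    (card_le_card (inter_subset_inter (inter_subset_inter a b) c))

lemma pr_le_upFam {p : ℝ} (hp0 : 0 ≤ p) (hp1 : p ≤ 1) {n N : ℕ} (hn : n ≤ N)
    (𝒢 : Finset (Finset ℕ)) : pr p (Icc 1 n) (· ∈ 𝒢) ≤ pr p (Icc 1 N) (· ∈ upFam N 𝒢) := by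
  unfold pr
  nth_rewrite 1 [Icc_union_Ioc hn]
  rw [ev_union p (disj_Icc_Ioc n N)]
  refine ev_mono hp0 hp1 fun A hA => ?_
  rw [← ev_const p (ind (A ∈ 𝒢)) (Ioc n N)]
  refine ev_mono hp0 hp1 fun B hB => ind_mono fun h => mem_upFam.2 ⟨?_, A, h, subset_union_left⟩
  rw [Icc_union_Ioc hn]
  exact union_subset_union hA hB

lemma image_Icc_eq {n : ℕ} {π : Equiv.Perm ℕ} (hπ : ∀ x ∈ Icc 1 n, π x ∈ Icc 1 n) :
    (Icc 1 n).image π = Icc 1 n :=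
  eq_of_subset_of_card_le (image_subset_iff.2 hπ)
    (by rw [card_image_of_injective _ π.injective])

lemma image_perm_symm (π : Equiv.Perm ℕ) (H : Finset ℕ) : (H.image π.symm).image π = H := by
  rw [image_image]
  simp

lemma mu_isom (p : ℝ) {n : ℕ} {𝒢 𝒢' : Finset (Finset ℕ)} (h : Isom n 𝒢 𝒢') :
    mu p n 𝒢' = mu p n 𝒢 := by
  obtain ⟨π, -, rfl⟩ := h
  rw [mu, sum_image fun A _ B _ hAB => image_injective π.injective hAB, mu]
  refine sum_congr rfl fun G _ => ?_
  rw [card_image_of_injective _ π.injective]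

lemma exists_perm {n k : ℕ} (hk : k ≤ n) {S : Finset ℕ} (hS : S ⊆ Icc 1 n) (hc : S.card = k) :
    ∃ π : Equiv.Perm ℕ, (∀ x ∈ Icc 1 n, π x ∈ Icc 1 n) ∧ S.image π = Icc 1 k := by
  have hkn : Icc 1 k ⊆ Icc 1 n := Icc_subset_Icc_right hk
  have e : {x : {x : ℕ // x ∈ Icc 1 n} // x.1 ∈ S} ≃
      {x : {x : ℕ // x ∈ Icc 1 n} // x.1 ∈ Icc 1 k} :=
    (Equiv.subtypeSubtypeEquivSubtype fun h => hS h).trans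
      ((Finset.equivOfCardEq (by simp [hc])).trans
        (Equiv.subtypeSubtypeEquivSubtype fun h => hkn h).symm)
  refine ⟨Equiv.Perm.ofSubtype e.extendSubtype, fun x hx => ?_, ?_⟩
  · rw [Equiv.Perm.ofSubtype_apply_of_mem _ hx]
    exact (e.extendSubtype ⟨x, hx⟩).2
  · refine eq_of_subset_of_card_le (image_subset_iff.2 fun x hx => ?_)
      (by rw [card_image_of_injective _ (Equiv.injective _), hc]; simp)
    rw [Equiv.Perm.ofSubtype_apply_of_mem _ (hS hx)]
    exact e.extendSubtype_mem ⟨x, hS hx⟩ hx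

/-- All copies of `F_s^t` on a `(t + 3s)`-set inside `[n]` are isomorphic. -/
lemma isom_Fst {n t s : ℕ} {S : Finset ℕ} (hS : S ⊆ Icc 1 n) (hc : S.card = t + 3 * s) :
    Isom n ((Icc 1 n).powerset.filter fun G => t + 2 * s ≤ (G ∩ S).card) (Fst n t s) := by
  have hk : t + 3 * s ≤ n := by
    have := card_le_card hS
    rwa [hc, Nat.card_Icc, Nat.add_sub_cancel] at this
  obtain ⟨π, hπ, hπS⟩ := exists_perm hk hS hc
  refine ⟨π, hπ, ?_⟩
  have hcard : ∀ G : Finset ℕ, (G.image π ∩ Icc 1 (t + 3 * s)).card = (G ∩ S).card := by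
    intro G
    rw [← hπS, ← image_inter _ _ π.injective, card_image_of_injective _ π.injective]
  ext H
  simp only [Fst, mem_image, mem_filter, mem_powerset]
  constructor
  · rintro ⟨h1, h2⟩
    refine ⟨H.image π.symm, ⟨?_, ?_⟩, image_perm_symm π H⟩
    · intro x hx
      obtain ⟨y, hy, rfl⟩ := mem_image.1 hx
      have := h1 hy
      rw [← image_Icc_eq hπ] at this
      obtain ⟨z, hz, rfl⟩ := mem_image.1 this
      rwa [Equiv.symm_apply_apply]
    · rwa [← hcard, image_perm_symm]
  · rintro ⟨G, ⟨h1, h2⟩, rfl⟩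
    refine ⟨?_, by rwa [hcard]⟩
    rw [← image_Icc_eq hπ]
    exact image_subset_image h1

lemma mu_Fst (p : ℝ) (n t s : ℕ) :
    mu p n (Fst n t s) = pr p (Icc 1 n) (fun G => t + 2 * s ≤ cnt G (t + 3 * s)) := by
  have hF : FamilyOn n (Fst n t s) := fun G hG => mem_powerset.1 (mem_filter.1 hG).1
  rw [mu_eq_pr p hF]
  refine ev_congr fun G hG => ?_
  simp only [Fst, mem_filter, mem_powerset, hG, true_and, cnt]

lemma mu_F0 (p : ℝ) {n t : ℕ} (hn : t ≤ n) : mu p n (Fst n t 0) = p ^ t := by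
  rw [mu_Fst]
  exact pr_F0 p hn

lemma mu_F1 {n t : ℕ} (hn : t + 3 ≤ n) : mu (p0 t) n (Fst n t 1) = p0 t ^ t := by
  rw [mu_Fst]
  refine (pr_F1 (p0 t) hn).trans ?_
  have e1 := F1_sub (p0 t) t
  rw [p0_eq t, sub_self, mul_zero] at e1
  linarith

/-- A family contained in a copy of `F_s^t` and of no smaller measure equals that copy. -/
lemma isom_of_subset {p : ℝ} (hp : 0 < p) (hp1 : p < 1) {n t s : ℕ} {𝒢 : Finset (Finset ℕ)}
    (hF : FamilyOn n 𝒢) {S : Finset ℕ} (hS : S ⊆ Icc 1 n) (hc : S.card = t + 3 * s)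
    (hsub : ∀ G ∈ 𝒢, t + 2 * s ≤ (G ∩ S).card) (hm : mu p n (Fst n t s) ≤ mu p n 𝒢) :
    Isom n 𝒢 (Fst n t s) := by
  have hiso := isom_Fst hS hc
  set 𝒞 := (Icc 1 n).powerset.filter fun G => t + 2 * s ≤ (G ∩ S).card with h𝒞
  have hF𝒞 : FamilyOn n 𝒞 := fun G hG => mem_powerset.1 (mem_filter.1 hG).1
  have hle : ∀ G ∈ 𝒢, G ∈ 𝒞 := fun G hG =>
    mem_filter.2 ⟨mem_powerset.2 (hF G hG), hsub G hG⟩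
  rw [mu_isom p hiso, mu_eq_pr p hF, mu_eq_pr p hF𝒞] at hm
  have : 𝒢 = 𝒞 := by
    ext G
    exact ⟨hle G, fun h => pr_eq_imp hp hp1 (fun G _ h => hle G h) hm G (hF𝒞 G h) h⟩
  rwa [this]

/-- If every `(t + 2)`-subset of the `(t + 3)`-set `S` contains a member of `𝒢`, then no member
misses two elements of `S`. -/
lemma inter_S {t : ℕ} (ht : 1 ≤ t) {𝒢 : Finset (Finset ℕ)} (hI : Intersecting3 t 𝒢)
    {S : Finset ℕ} (hc : S.card = t + 3) (hS : ∀ a ∈ S, ∃ G ∈ 𝒢, G ⊆ S.erase a) {G : Finset ℕ}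
    (hG : G ∈ 𝒢) {x y : ℕ} (hx : x ∈ S) (hy : y ∈ S) (hxy : x ≠ y) (hxG : x ∉ G) (hyG : y ∉ G) :
    False := by
  have c2 : ((S.erase x).erase y).card = t + 1 := by
    rw [card_erase_of_mem (mem_erase.2 ⟨hxy.symm, hy⟩), card_erase_of_mem hx, hc]; omega
  obtain ⟨u, hu, v, hv, huv⟩ := one_lt_card.1 (by omega : 1 < ((S.erase x).erase y).card)
  have c4 : ((((S.erase x).erase y).erase u).erase v).card = t - 1 := by
    rw [card_erase_of_mem (mem_erase.2 ⟨huv.symm, hv⟩), card_erase_of_mem hu, c2]; omega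
  simp only [mem_erase] at hu hv
  obtain ⟨U, hU, hUS⟩ := hS u hu.2.2
  obtain ⟨V, hV, hVS⟩ := hS v hv.2.2
  have := hI G hG U hU V hV
  have hsub : G ∩ U ∩ V ⊆ (((S.erase x).erase y).erase u).erase v := by
    intro z hz
    simp only [mem_inter] at hz
    have e1 := mem_erase.1 (hUS hz.1.2)
    have e2 := mem_erase.1 (hVS hz.2)
    simp only [mem_erase]
    exact ⟨e2.1, e1.1, fun h => hyG (h ▸ hz.1.1), fun h => hxG (h ▸ hz.1.1), e1.2⟩
  have := card_le_card hsub
  omega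

lemma isom_of_le {t n : ℕ} (ht : 15 ≤ t) (hn : t ≤ n) {p : ℝ} (hp : 0 < p) (hpp : p ≤ p0 t)
    {𝒢 : Finset (Finset ℕ)} (hF : FamilyOn n 𝒢) (hI : Intersecting3 t 𝒢)
    (hm : p ^ t ≤ mu p n 𝒢) :
    Isom n 𝒢 (Fst n t 0) ∨ (p = p0 t ∧ t + 3 ≤ n ∧ Isom n 𝒢 (Fst n t 1)) := by
  have hp1 : p < 1 := by linarith [p0_lt_half ht]
  -- six further elements make room for the prefixes used in the shifted case
  have hup := pr_le_upFam hp.le hp1.le (by omega : n ≤ n + 6) 𝒢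
  rw [← mu_eq_pr p hF] at hup
  rcases increasing_case ht (by omega : t + 6 ≤ n + 6) hp hpp _ (upFam (n + 6) 𝒢) rfl
    (fun H hH => (mem_upFam.1 hH).1)
    (fun A hA B hAB hB => by
      obtain ⟨-, G, hG, hGA⟩ := mem_upFam.1 hA
      exact mem_upFam.2 ⟨hB, G, hG, hGA.trans hAB⟩)
    (upFam_intersecting hI) (hm.trans hup) with ⟨T, hT, hc⟩ | ⟨hpe, S, hc, hS⟩
  · left
    obtain ⟨-, G, hG, hGT⟩ := mem_upFam.1 hT
    have hGc := hI G hG G hG G hG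
    rw [inter_self, inter_self] at hGc
    obtain rfl : G = T := eq_of_subset_of_card_le hGT (by omega)
    refine isom_of_subset hp hp1 hF (hF G hG) (by omega) (fun H hH => ?_)
      (by rwa [mu_F0 p hn])
    have := hI H hH G hG G hG
    rwa [inter_assoc, inter_self] at this
  · right
    have hS' : ∀ a ∈ S, ∃ G ∈ 𝒢, G ⊆ S.erase a := fun a ha => (mem_upFam.1 (hS a ha)).2
    have hSn : S ⊆ Icc 1 n := by
      intro b hb
      by_contra hbn
      obtain ⟨a, ha, hab⟩ := exists_mem_ne (by omega : 1 < S.card) b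
      obtain ⟨G, hG, hGa⟩ := hS' a ha
      exact inter_S (by omega) hI hc hS' hG ha hb hab (fun h => notMem_erase a S (hGa h))
        (fun h => hbn (hF G hG h))
    have hn3 : t + 3 ≤ n := by
      have := card_le_card hSn
      rwa [hc, Nat.card_Icc, Nat.add_sub_cancel] at this
    refine ⟨hpe, hn3, isom_of_subset hp hp1 hF hSn (by omega) (fun G hG => ?_) ?_⟩
    · have h1 : (S \ G).card ≤ 1 := by
        rw [card_le_one]
        intro x hx y hy
        rw [mem_sdiff] at hx hy
        by_contra hxy
        exact inter_S (by omega) hI hc hS' hG hx.1 hy.1 hxy hx.2 hy.2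
      have h2 := card_sdiff_add_card_inter S G
      rw [inter_comm] at h2
      omega
    · rw [hpe, mu_F1 hn3]
      rwa [hpe] at hm

/-- Theorem 1: for `t ≥ 15`, `n ≥ t` and `0 < p ≤ p₀(t)`, every 3-wise
`t`-intersecting family `𝒢 ⊆ 2^[n]` has `μ_p(𝒢) ≤ p^t`, with equality iff
`𝒢 ≅ F_0^t`, or `p = p₀(t)` and `𝒢 ≅ F_1^t` (the latter requiring `n ≥ t+3`). -/
theorem thm1 (t n : ℕ) (ht : 15 ≤ t) (hn : t ≤ n) (p : ℝ)
    (hp : 0 < p) (hpp : p ≤ p0 t)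
    (𝒢 : Finset (Finset ℕ)) (hfam : FamilyOn n 𝒢) (hint : Intersecting3 t 𝒢) :
    mu p n 𝒢 ≤ p ^ t ∧
      (mu p n 𝒢 = p ^ t ↔
        Isom n 𝒢 (Fst n t 0) ∨
          (p = p0 t ∧ t + 3 ≤ n ∧ Isom n 𝒢 (Fst n t 1))) := by
  have back : Isom n 𝒢 (Fst n t 0) ∨ (p = p0 t ∧ t + 3 ≤ n ∧ Isom n 𝒢 (Fst n t 1)) →
      mu p n 𝒢 = p ^ t := by
    rintro (h | ⟨rfl, hn3, h⟩)
    · rw [← mu_isom p h, mu_F0 p hn]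
    · rw [← mu_isom _ h, mu_F1 hn3]
  have forth := isom_of_le ht hn hp hpp hfam hint
  refine ⟨?_, fun h => forth h.ge, back⟩
  by_contra hlt
  exact hlt (back (forth (not_le.1 hlt).le)).le
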